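/- arXiv:1607.05595 — 4 statements merged into one kernel-verified Lean document; each statement's English description precedes it below -/
import Mathlib

section
/- There exists a constant C > 0 such that for every prime q ≥ 2: Σ_{a=1}^{q} |M(a,q)| ≤ C·q·log q. -/
open Complex Real Finset

open scoped Classical in
/-- `M(a,q)`: the twisted second moment over primitive (= nontrivial, for prime `q`)
characters mod `q`. -/
noncomputable def Mtw (a : ℤ) (q : ℕ) [NeZero q] : ℂ :=
  (Real.sqrt q / (Nat.totient q : ℝ)) *
    ∑ χ : DirichletCharacter ℂ q, if χ = 1 then 0 else
      (‖χ.LFunction (1/2)‖^2 : ℂ) * χ (a : ZMod q)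

/-!
For primitive `χ` mod `q`, completing the `L`-function writes `√q |L(1/2, χ)|²` as `|∫ k_χ|²`,
where `k_χ` is the twisted theta series in the logarithmic variable. The functional equation makes
`k_χ` self-dual under `x ↦ -x` up to a unimodular root number, so that `|∫ k_χ|²` is twice the
integral over `s > 0` of the convolution of `k_χ` with its conjugate. There the root number has
disappeared and the two arguments `x`, `y = s - x` have positive sum, so the decay of theta makes
the convolution short: this is an approximate functional equation for `|L(1/2, χ)|²`.

Expanding `k_χ(x) conj (k_χ(y))` gives the terms `χ(b) conj (χ(c))` with real coefficients, a theta
kernel at `x` times one at `y`. Orthogonality bounds the `ℓ¹`-norm over `a` of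
`∑ χ(a) χ(b) conj (χ(c))` by `2 φ(q)`, uniformly in `b` and `c`. What is left is the total mass of
the theta kernels at `x` times that at `y`, and the short convolution of these masses is of size
`q log q`.
-/

section SelfDualKernels

open MeasureTheory Set
open scoped ComplexConjugate

/-- A kernel on `ℝ` satisfying a functional equation `x ↔ -x` with root number `ε`. -/
def IsSelfDual (k : ℝ → ℂ) : Prop :=
  ∃ ε : ℂ, ‖ε‖ = 1 ∧ ∀ x, k (-x) = ε * conj (k x)

/-- The convolution of a kernel with its conjugate, whose integral is `‖∫ k‖²`. -/
noncomputable def conjConvolution (k : ℝ → ℂ) (s : ℝ) : ℂ :=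
  ∫ x, k x * conj (k (s - x))

variable {k : ℝ → ℂ}

lemma conjConvolution_eq_convolution (k : ℝ → ℂ) :
    conjConvolution k =
      MeasureTheory.convolution k (fun x ↦ conj (k x)) (ContinuousLinearMap.mul ℝ ℂ) volume := by
  ext s
  simp [conjConvolution, MeasureTheory.convolution]

lemma integrable_conj_comp (hk : Integrable k) : Integrable fun x ↦ conj (k x) :=
  Complex.conjLIE.toContinuousLinearEquiv.toContinuousLinearMap.integrable_comp hk

lemma integrable_conjConvolution (hk : Integrable k) : Integrable (conjConvolution k) := by
  rw [conjConvolution_eq_convolution]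
  exact hk.integrable_convolution _ (integrable_conj_comp hk)

lemma integral_conjConvolution (hk : Integrable k) :
    ∫ s, conjConvolution k s = (‖∫ x, k x‖ : ℂ) ^ 2 := by
  rw [conjConvolution_eq_convolution, integral_convolution _ hk (integrable_conj_comp hk),
    ContinuousLinearMap.mul_apply', integral_conj, Complex.mul_conj']

namespace IsSelfDual

lemma norm_neg (h : IsSelfDual k) (x : ℝ) : ‖k (-x)‖ = ‖k x‖ := by
  obtain ⟨ε, hε, hk⟩ := h
  rw [hk, norm_mul, hε, one_mul, RCLike.norm_conj]

lemma norm_abs (h : IsSelfDual k) (x : ℝ) : ‖k |x|‖ = ‖k x‖ := by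
  rcases abs_choice x with hx | hx <;> rw [hx]
  exact h.norm_neg x

lemma conjConvolution_neg (h : IsSelfDual k) (s : ℝ) :
    conjConvolution k (-s) = conjConvolution k s := by
  obtain ⟨ε, hε, hk⟩ := h
  have hεε : ε * conj ε = 1 := by rw [Complex.mul_conj', hε]; simp
  have swap (x : ℝ) :
      k (-x) * conj (k (-s - -x)) = k (s - x) * conj (k (s - (s - x))) := by
    rw [show -s - -x = -(s - x) by ring, hk, hk, sub_sub_cancel, map_mul, conj_conj]
    linear_combination (conj (k x)) * k (s - x) * hεε
  calc conjConvolution k (-s) = ∫ x, k (-x) * conj (k (-s - -x)) :=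
        (integral_neg_eq_self (fun x ↦ k x * conj (k (-s - x))) volume).symm
    _ = ∫ x, k (s - x) * conj (k (s - (s - x))) := by simp only [swap]
    _ = conjConvolution k s :=
        integral_sub_left_eq_self (fun x ↦ k x * conj (k (s - x))) volume s

lemma norm_integral_sq (h : IsSelfDual k) (hk : Integrable k) :
    (‖∫ x, k x‖ : ℂ) ^ 2 = 2 * ∫ s in Ioi (0 : ℝ), conjConvolution k s := by
  have hc := integrable_conjConvolution hk
  have hneg :
      ∫ s in Iic (0 : ℝ), conjConvolution k s = ∫ s in Ioi (0 : ℝ), conjConvolution k s := by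
    simpa only [neg_zero, h.conjConvolution_neg] using
      (integral_comp_neg_Ioi (0 : ℝ) (conjConvolution k)).symm
  rw [← integral_conjConvolution hk,
    ← intervalIntegral.integral_Iic_add_Ioi hc.integrableOn hc.integrableOn, hneg, two_mul]

end IsSelfDual

end SelfDualKernels

section DecayWeight

open MeasureTheory Set
open scoped ComplexConjugate

lemma integrable_comp_abs {E : Type*} [NormedAddCommGroup E] {f : ℝ → E}
    (hf : IntegrableOn f (Ioi 0)) : Integrable fun x ↦ f |x| := by
  have pos : IntegrableOn (fun x ↦ f |x|) (Ioi 0) :=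
    hf.congr_fun (fun x hx ↦ by rw [abs_of_pos hx]) measurableSet_Ioi
  have neg : IntegrableOn (fun x ↦ f |x|) (Iic 0) := by
    rw [← integrableOn_Ici_iff_integrableOn_Ioi] at pos
    simpa using pos.comp_neg
  rw [← integrableOn_univ, ← Iic_union_Ioi (a := (0 : ℝ))]
  exact neg.union pos

lemma sum_norm_integral_le {α ι E : Type*} [MeasurableSpace α] {μ : Measure α}
    [NormedAddCommGroup E] [NormedSpace ℝ E] {s : Finset ι} {f : ι → α → E} {g : α → ℝ}
    (hf : ∀ i ∈ s, Integrable (f i) μ) (hg : Integrable g μ)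
    (h : ∀ᵐ x ∂μ, ∑ i ∈ s, ‖f i x‖ ≤ g x) :
    ∑ i ∈ s, ‖∫ x, f i x ∂μ‖ ≤ ∫ x, g x ∂μ :=
  calc ∑ i ∈ s, ‖∫ x, f i x ∂μ‖ ≤ ∑ i ∈ s, ∫ x, ‖f i x‖ ∂μ :=
        Finset.sum_le_sum fun _ _ ↦ norm_integral_le_integral_norm _
    _ = ∫ x, ∑ i ∈ s, ‖f i x‖ ∂μ := (integral_finsetSum s fun i hi ↦ (hf i hi).norm).symm
    _ ≤ ∫ x, g x ∂μ := integral_mono_ae (integrable_finsetSum s fun i hi ↦ (hf i hi).norm) hg h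

/-- The decay of a theta kernel of modulus `Q` in its logarithmic variable `x`: exponential with
rate `κ`, and doubly exponential once `x > log Q`. -/
noncomputable def decayWeight (κ Q x : ℝ) : ℝ :=
  rexp (-(κ * x)) * rexp (-(rexp x / Q))

variable {κ Q : ℝ}

lemma decayWeight_nonneg (κ Q x : ℝ) : 0 ≤ decayWeight κ Q x := by
  unfold decayWeight; positivity

lemma decayWeight_le_exp (hQ : 0 ≤ Q) (x : ℝ) : decayWeight κ Q x ≤ rexp (-(κ * x)) :=
  mul_le_of_le_one_right (exp_nonneg _) (Real.exp_le_one_iff.mpr (neg_nonpos.mpr (by positivity)))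

lemma exp_abs_le_exp_add_exp {s : ℝ} (hs : 0 ≤ s) (x : ℝ) :
    rexp |x| ≤ rexp x + rexp (s - x) := by
  have hneg : rexp (-x) ≤ rexp (s - x) := Real.exp_le_exp.mpr (by linarith)
  rcases abs_choice x with h | h <;> rw [h] <;>
    linarith [Real.exp_pos x, Real.exp_pos (s - x)]

lemma decayWeight_mul_decayWeight_sub_le (hQ : 0 ≤ Q) {s : ℝ} (hs : 0 ≤ s) (x : ℝ) :
    decayWeight κ Q x * decayWeight κ Q (s - x) ≤
      rexp (-(κ * s)) * rexp (-(rexp |x| / Q)) := by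
  have hle : rexp |x| / Q ≤ rexp x / Q + rexp (s - x) / Q := by
    rw [← add_div]
    gcongr
    exact exp_abs_le_exp_add_exp hs x
  simp only [decayWeight, ← Real.exp_add]
  exact Real.exp_le_exp.mpr (by linarith)

lemma exp_neg_exp_div_le (hQ : 0 < Q) (x : ℝ) : rexp (-(rexp x / Q)) ≤ Q * rexp (-x) := by
  have h := Real.add_one_le_exp (x - Real.log Q)
  rw [Real.exp_sub, Real.exp_log hQ] at h
  calc rexp (-(rexp x / Q)) ≤ rexp (Real.log Q + -x) := Real.exp_le_exp.mpr (by linarith)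
    _ = Q * rexp (-x) := by rw [Real.exp_add, Real.exp_log hQ]

lemma integrableOn_exp_neg_exp_div (hQ : 0 < Q) (a : ℝ) :
    IntegrableOn (fun x ↦ rexp (-(rexp x / Q))) (Ioi a) :=
  ((integrableOn_exp_neg_Ioi a).const_mul Q).mono' (by fun_prop) <|
    Filter.Eventually.of_forall fun x ↦ by
      simpa only [Real.norm_eq_abs, Real.abs_exp] using exp_neg_exp_div_le hQ x

lemma integrable_exp_neg_exp_abs_div (hQ : 0 < Q) :
    Integrable fun x : ℝ ↦ rexp (-(rexp |x| / Q)) :=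
  integrable_comp_abs (integrableOn_exp_neg_exp_div hQ 0)

lemma integral_Ioi_exp_neg_exp_div_le (hQ : 1 ≤ Q) :
    ∫ x in Ioi (0 : ℝ), rexp (-(rexp x / Q)) ≤ Real.log Q + 1 := by
  have hQ0 : 0 < Q := by linarith
  have hlog : 0 ≤ Real.log Q := Real.log_nonneg hQ
  have hint := integrableOn_exp_neg_exp_div hQ0 0
  have head : ∫ x in Ioc 0 (Real.log Q), rexp (-(rexp x / Q)) ≤ Real.log Q := by
    have hmono : ∫ x in Ioc 0 (Real.log Q), rexp (-(rexp x / Q)) ≤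
        ∫ _ in Ioc 0 (Real.log Q), (1 : ℝ) :=
      setIntegral_mono (hint.mono_set Ioc_subset_Ioi_self) (integrableOn_const (by simp))
        fun x ↦ Real.exp_le_one_iff.mpr (neg_nonpos.mpr (by positivity))
    simpa [hlog] using hmono
  have tail : ∫ x in Ioi (Real.log Q), rexp (-(rexp x / Q)) ≤ 1 :=
    calc _ ≤ ∫ x in Ioi (Real.log Q), Q * rexp (-x) :=
          setIntegral_mono (integrableOn_exp_neg_exp_div hQ0 _)
            ((integrableOn_exp_neg_Ioi _).const_mul Q) (exp_neg_exp_div_le hQ0)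
      _ = 1 := by
          rw [integral_const_mul, integral_exp_neg_Ioi, Real.exp_neg, Real.exp_log hQ0,
            mul_inv_cancel₀ hQ0.ne']
  rw [← Ioc_union_Ioi_eq_Ioi hlog, setIntegral_union (Ioc_disjoint_Ioi le_rfl) measurableSet_Ioi
    (hint.mono_set Ioc_subset_Ioi_self) (integrableOn_exp_neg_exp_div hQ0 _)]
  linarith

lemma integral_exp_neg_exp_abs_div_le (hQ : 1 ≤ Q) :
    ∫ x : ℝ, rexp (-(rexp |x| / Q)) ≤ 2 * (Real.log Q + 1) := by
  rw [integral_comp_abs (f := fun x ↦ rexp (-(rexp x / Q)))]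
  linarith [integral_Ioi_exp_neg_exp_div_le hQ]

namespace IsSelfDual

variable {k : ℝ → ℂ} {A : ℝ}

lemma norm_le_exp_neg_abs (h : IsSelfDual k) (hQ : 0 ≤ Q) (hA : 0 ≤ A)
    (hw : ∀ x, ‖k x‖ ≤ A * decayWeight κ Q x) (x : ℝ) : ‖k x‖ ≤ A * rexp (-(κ * |x|)) := by
  rw [← h.norm_abs]
  exact (hw |x|).trans (by gcongr; exact decayWeight_le_exp hQ _)

lemma integrable (h : IsSelfDual k) (hc : Continuous k) (hQ : 0 ≤ Q) (hκ : 0 < κ) (hA : 0 ≤ A)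
    (hw : ∀ x, ‖k x‖ ≤ A * decayWeight κ Q x) : Integrable k := by
  have hexp : Integrable fun x : ℝ ↦ A * rexp (-(κ * |x|)) :=
    (integrable_comp_abs (f := fun x ↦ rexp (-(κ * x))) <| by
      simpa only [neg_mul] using exp_neg_integrableOn_Ioi 0 hκ).const_mul A
  exact hexp.mono' hc.aestronglyMeasurable
    (Filter.Eventually.of_forall (h.norm_le_exp_neg_abs hQ hA hw))

lemma integrable_mul_conj_sub (h : IsSelfDual k) (hc : Continuous k) (hQ : 0 ≤ Q) (hκ : 0 < κ)
    (hA : 0 ≤ A) (hw : ∀ x, ‖k x‖ ≤ A * decayWeight κ Q x) (s : ℝ) :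
    Integrable fun x ↦ k x * conj (k (s - x)) := by
  refine (h.integrable hc hQ hκ hA hw).mul_bdd (c := A)
    (by fun_prop : Continuous fun x ↦ conj (k (s - x))).aestronglyMeasurable
    (Filter.Eventually.of_forall fun x ↦ ?_)
  rw [RCLike.norm_conj]
  exact (h.norm_le_exp_neg_abs hQ hA hw _).trans <|
    mul_le_of_le_one_right hA (Real.exp_le_one_iff.mpr (neg_nonpos.mpr (by positivity)))

end IsSelfDual

variable {ι J : Type*} {S : Finset ι} {T : Finset J} {c : J → ι → ℂ} {k : ι → ℝ → ℂ} {A B : ℝ}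

lemma sum_norm_sum_conjConvolution_le (hQ : 1 ≤ Q) (hκ : 0 < κ) (hA : 0 ≤ A) (hB : 0 ≤ B)
    (hself : ∀ i ∈ S, IsSelfDual (k i)) (hcont : ∀ i ∈ S, Continuous (k i))
    (hw : ∀ i ∈ S, ∀ x, ‖k i x‖ ≤ A * decayWeight κ Q x)
    (hmix : ∀ x y, ∑ j ∈ T, ‖∑ i ∈ S, c j i * (k i x * conj (k i y))‖ ≤
      B * (decayWeight κ Q x * decayWeight κ Q y)) {s : ℝ} (hs : 0 ≤ s) :
    ∑ j ∈ T, ‖∑ i ∈ S, c j i * conjConvolution (k i) s‖ ≤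
      B * (2 * (Real.log Q + 1)) * rexp (-(κ * s)) := by
  have hint (j : J) (i : ι) (hi : i ∈ S) :
      Integrable fun x ↦ c j i * (k i x * conj (k i (s - x))) :=
    ((hself i hi).integrable_mul_conj_sub (hcont i hi) (by linarith) hκ hA (hw i hi) s).const_mul _
  have hswap (j : J) : ∑ i ∈ S, c j i * conjConvolution (k i) s =
      ∫ x, ∑ i ∈ S, c j i * (k i x * conj (k i (s - x))) := by
    simp only [conjConvolution, ← integral_const_mul, integral_finsetSum S (hint j)]
  simp only [hswap]
  calc ∑ j ∈ T, ‖∫ x, ∑ i ∈ S, c j i * (k i x * conj (k i (s - x)))‖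
      ≤ ∫ x : ℝ, B * rexp (-(κ * s)) * rexp (-(rexp |x| / Q)) := by
        refine sum_norm_integral_le (fun j _ ↦ integrable_finsetSum S (hint j))
          ((integrable_exp_neg_exp_abs_div (by linarith)).const_mul _)
          (Filter.Eventually.of_forall fun x ↦ (hmix x (s - x)).trans ?_)
        rw [mul_assoc]
        exact mul_le_mul_of_nonneg_left
          (decayWeight_mul_decayWeight_sub_le (by linarith) hs x) hB
    _ ≤ B * rexp (-(κ * s)) * (2 * (Real.log Q + 1)) := by
        rw [integral_const_mul]
        gcongr
        exact integral_exp_neg_exp_abs_div_le hQ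
    _ = B * (2 * (Real.log Q + 1)) * rexp (-(κ * s)) := by ring

lemma sum_norm_sum_norm_integral_sq_le (hQ : 1 ≤ Q) (hκ : 0 < κ) (hA : 0 ≤ A) (hB : 0 ≤ B)
    (hself : ∀ i ∈ S, IsSelfDual (k i)) (hcont : ∀ i ∈ S, Continuous (k i))
    (hw : ∀ i ∈ S, ∀ x, ‖k i x‖ ≤ A * decayWeight κ Q x)
    (hmix : ∀ x y, ∑ j ∈ T, ‖∑ i ∈ S, c j i * (k i x * conj (k i y))‖ ≤
      B * (decayWeight κ Q x * decayWeight κ Q y)) :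
    ∑ j ∈ T, ‖∑ i ∈ S, c j i * (‖∫ x, k i x‖ : ℂ) ^ 2‖ ≤ 4 / κ * B * (Real.log Q + 1) := by
  have hki (i : ι) (hi : i ∈ S) : Integrable (k i) :=
    (hself i hi).integrable (hcont i hi) (by linarith) hκ hA (hw i hi)
  have hint (j : J) (i : ι) (hi : i ∈ S) :
      IntegrableOn (fun s ↦ c j i * conjConvolution (k i) s) (Ioi 0) :=
    (integrable_conjConvolution (hki i hi)).integrableOn.const_mul _
  have hexp : IntegrableOn (fun s ↦ rexp (-(κ * s))) (Ioi 0) := by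
    simpa only [neg_mul] using exp_neg_integrableOn_Ioi 0 hκ
  have hexp_integral : ∫ s in Ioi (0 : ℝ), rexp (-(κ * s)) = 1 / κ := by
    simpa [neg_mul, neg_div_neg_eq] using integral_exp_mul_Ioi (neg_neg_of_pos hκ) 0
  have hswap (j : J) : ∑ i ∈ S, c j i * (‖∫ x, k i x‖ : ℂ) ^ 2 =
      2 * ∫ s in Ioi (0 : ℝ), ∑ i ∈ S, c j i * conjConvolution (k i) s := by
    rw [integral_finsetSum S (hint j), Finset.mul_sum]
    refine Finset.sum_congr rfl fun i hi ↦ ?_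
    rw [(hself i hi).norm_integral_sq (hki i hi), integral_const_mul]
    ring
  simp only [hswap, norm_mul, Complex.norm_ofNat, ← Finset.mul_sum]
  calc 2 * ∑ j ∈ T, ‖∫ s in Ioi (0 : ℝ), ∑ i ∈ S, c j i * conjConvolution (k i) s‖
      ≤ 2 * ∫ s in Ioi (0 : ℝ), B * (2 * (Real.log Q + 1)) * rexp (-(κ * s)) := by
        gcongr
        refine sum_norm_integral_le (fun j _ ↦ integrable_finsetSum S (hint j))
          (hexp.const_mul _) ?_
        filter_upwards [ae_restrict_mem measurableSet_Ioi] with s hs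
        exact sum_norm_sum_conjConvolution_le hQ hκ hA hB hself hcont hw hmix (le_of_lt hs)
    _ = 4 / κ * B * (Real.log Q + 1) := by
        rw [integral_const_mul, hexp_integral]
        ring

end DecayWeight

section Theta

open HurwitzZeta

variable {N : ℕ} [NeZero N]

lemma mul_add_val_injective (c : ZMod N) :
    Function.Injective fun m : ℤ ↦ m * N + c.val := fun _ _ h ↦
  mul_right_cancel₀ (Int.natCast_ne_zero.mpr (NeZero.ne N)) (add_right_cancel h)

lemma hasSum_of_residueClasses {E : Type*} [AddCommMonoid E] [TopologicalSpace E] [ContinuousAdd E]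
    {F : ℤ → E} {A : ZMod N → E}
    (h : ∀ c : ZMod N, HasSum (fun m : ℤ ↦ F (m * N + c.val)) (A c)) :
    HasSum F (∑ c, A c) := by
  classical
  have class_sum (c : ZMod N) : HasSum (fun n : ℤ ↦ if (n : ZMod N) = c then F n else 0) (A c) := by
    refine ((mul_add_val_injective c).hasSum_iff fun n hn ↦ if_neg fun hc ↦ hn ?_).mp ?_
    · subst hc
      refine ⟨n / N, ?_⟩
      simpa only [ZMod.val_intCast] using Int.ediv_mul_add_emod n N
    · simpa [Function.comp_def] using h c
  simpa using hasSum_sum fun c (_ : c ∈ Finset.univ) ↦ class_sum c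

lemma hasSum_exp_neg_abs_mul {δ : ℝ} (hδ : 0 < δ) :
    HasSum (fun m : ℤ ↦ if m = 0 then 0 else rexp (-(|(m : ℝ)| * δ)))
      (2 * (rexp (-δ) * (1 - rexp (-δ))⁻¹)) := by
  have geometric : HasSum (fun n : ℕ ↦ rexp (-((n + 1 : ℝ) * δ)))
      (rexp (-δ) * (1 - rexp (-δ))⁻¹) := by
    refine ((hasSum_geometric_of_lt_one (Real.exp_pos _).le
      (Real.exp_lt_one_iff.mpr (neg_neg_of_pos hδ))).mul_left (rexp (-δ))).congr_fun fun n ↦ ?_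
    rw [← Real.exp_nat_mul, ← Real.exp_add]
    congr 1
    ring
  rw [two_mul]
  refine HasSum.of_nat_of_neg_add_one ?_ (geometric.congr_fun fun n ↦ ?_)
  · rw [← hasSum_nat_add_iff' 1]
    simp only [Finset.range_one, Finset.sum_singleton, Nat.cast_zero, if_true, sub_zero]
    refine geometric.congr_fun fun n ↦ ?_
    rw [if_neg (by positivity)]
    push_cast
    rw [abs_of_nonneg (by positivity)]
  · rw [if_neg (by omega)]
    push_cast
    rw [abs_neg, abs_of_nonneg (by positivity)]

lemma exp_neg_mul_inv_one_sub_le {δ : ℝ} (hδ : 0 < δ) :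
    rexp (-δ) * (1 - rexp (-δ))⁻¹ ≤ 1 / δ := by
  have hinv : rexp (-δ) * (1 - rexp (-δ))⁻¹ = (rexp δ - 1)⁻¹ := by
    rw [← inv_inv (rexp (-δ)), ← mul_inv, ← Real.exp_neg, neg_neg, mul_sub, mul_one,
      mul_inv_cancel₀ (Real.exp_ne_zero δ)]
  rw [hinv, ← one_div]
  exact one_div_le_one_div_of_le hδ (by linarith [Real.add_one_le_exp δ])

lemma one_add_mul_exp_neg_pi_sq_le {δ y : ℝ} (hδ : 0 ≤ δ) (hy : δ ≤ y) :
    (1 + y) * rexp (-π * y ^ 2) ≤ 2 * rexp (-δ ^ 2) * rexp (-y) := by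
  have hexp_half : rexp (1 / 2) ≤ 2 := by
    have hsq : rexp (1 / 2) * rexp (1 / 2) = rexp 1 := by rw [← Real.exp_add]; norm_num
    nlinarith [Real.exp_pos (1 / 2), Real.exp_one_lt_d9]
  calc (1 + y) * rexp (-π * y ^ 2) ≤ rexp y * rexp (-π * y ^ 2) := by
        gcongr
        linarith [Real.add_one_le_exp y]
    _ ≤ rexp (1 / 2 + -δ ^ 2 + -y) := by
        rw [← Real.exp_add]
        exact Real.exp_le_exp.mpr (by
          nlinarith [Real.pi_gt_three, sq_nonneg (2 * y - 1), sq_nonneg y,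
            mul_self_le_mul_self hδ hy])
    _ ≤ 2 * rexp (-δ ^ 2) * rexp (-y) := by
        rw [Real.exp_add, Real.exp_add]
        gcongr

/-- The combination of the even and odd Hurwitz theta kernels at `b`, the latter rescaled by `√t`
so that both transform with weight `1/2` under `t ↦ 1/t`. -/
noncomputable def weightedTheta (α β : ℝ) (b : UnitAddCircle) (t : ℝ) : ℝ :=
  α * evenKernel b t + β * (√t * oddKernel b t)

lemma hasSum_weightedTheta (α β a : ℝ) {t : ℝ} (ht : 0 < t) :
    HasSum (fun n : ℤ ↦ (α + β * ((n + a) * √t)) * rexp (-π * ((n + a) * √t) ^ 2))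
      (weightedTheta α β a t) := by
  refine (((hasSum_int_evenKernel a ht).mul_left α).add
    (((hasSum_int_oddKernel a ht).mul_left √t).mul_left β)).congr_fun fun n ↦ ?_
  rw [show -π * ((n + a) * √t) ^ 2 = -π * (n + a) ^ 2 * t by
    rw [mul_pow, Real.sq_sqrt ht.le]; ring]
  ring

lemma abs_theta_term_le (α β : ℝ) {δ y : ℝ} (hδ : 0 ≤ δ) (hy : δ ≤ |y|) :
    |(α + β * y) * rexp (-π * y ^ 2)| ≤
      2 * (|α| + |β|) * rexp (-δ ^ 2) * rexp (-|y|) := by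
  have hlin : |α + β * y| ≤ (|α| + |β|) * (1 + |y|) :=
    calc |α + β * y| ≤ |α| + |β| * |y| := by
          rw [← abs_mul]
          exact abs_add_le _ _
      _ ≤ (|α| + |β|) * (1 + |y|) := by nlinarith [abs_nonneg α, abs_nonneg β, abs_nonneg y]
  calc |(α + β * y) * rexp (-π * y ^ 2)| = |α + β * y| * rexp (-π * |y| ^ 2) := by
        rw [abs_mul, Real.abs_exp, sq_abs]
    _ ≤ (|α| + |β|) * ((1 + |y|) * rexp (-π * |y| ^ 2)) := by
        rw [← mul_assoc]
        gcongr
    _ ≤ (|α| + |β|) * (2 * rexp (-δ ^ 2) * rexp (-|y|)) := by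
        exact mul_le_mul_of_nonneg_left (one_add_mul_exp_neg_pi_sq_le hδ hy) (by positivity)
    _ = 2 * (|α| + |β|) * rexp (-δ ^ 2) * rexp (-|y|) := by ring

lemma abs_weightedTheta_le (α β : ℝ) {t : ℝ} (ht : 0 < t) {b : ZMod N} (hb : b ≠ 0) {A : ℝ}
    (hA : HasSum (fun m : ℤ ↦ rexp (-(|((m * N + b.val : ℤ) : ℝ)| * (√t / N)))) A) :
    |weightedTheta α β (ZMod.toAddCircle b) t| ≤
      2 * (|α| + |β|) * rexp (-(t / N ^ 2)) * A := by
  have hN : (0 : ℝ) < N := by exact_mod_cast NeZero.pos N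
  rw [ZMod.toAddCircle_apply, ← (hasSum_weightedTheta α β (b.val / N) ht).tsum_eq,
    ← Real.norm_eq_abs]
  refine tsum_of_norm_bounded (hA.mul_left _) fun n ↦ ?_
  have hne : n * N + b.val ≠ 0 := fun h ↦ hb <| by
    simpa using congr_arg (Int.cast : ℤ → ZMod N) h
  have hone : (1 : ℝ) ≤ |((n * N + b.val : ℤ) : ℝ)| := by exact_mod_cast Int.one_le_abs hne
  have hy : |(n + b.val / N : ℝ) * √t| = |((n * N + b.val : ℤ) : ℝ)| * (√t / N) := by
    rw [show (n + b.val / N : ℝ) * √t = ((n * N + b.val : ℤ) : ℝ) * (√t / N) by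
      push_cast; field_simp, abs_mul, abs_of_nonneg (by positivity : 0 ≤ √t / N)]
  have hterm := abs_theta_term_le α β (by positivity : 0 ≤ √t / N)
    (hy ▸ le_mul_of_one_le_left (by positivity) hone)
  rwa [hy, div_pow, Real.sq_sqrt ht.le] at hterm

lemma sum_abs_weightedTheta_le (α β : ℝ) {t : ℝ} (ht : 0 < t) :
    ∑ b ∈ ({0}ᶜ : Finset (ZMod N)), |weightedTheta α β (ZMod.toAddCircle b) t| ≤
      4 * (|α| + |β|) * (N / √t * rexp (-(t / N ^ 2))) := by
  have hN : (0 : ℝ) < N := by exact_mod_cast NeZero.pos N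
  have hδ : 0 < √t / N := div_pos (Real.sqrt_pos.mpr ht) hN
  have total := hasSum_exp_neg_abs_mul hδ
  set F : ℤ → ℝ := fun m ↦ if m = 0 then 0 else rexp (-(|(m : ℝ)| * (√t / N))) with hF
  have hF0 (m : ℤ) : 0 ≤ F m := by
    simp only [hF]
    split_ifs <;> positivity
  have hclass (b : ZMod N) : HasSum (fun m : ℤ ↦ F (m * N + b.val)) (∑' m : ℤ, F (m * N + b.val)) :=
    (total.summable.comp_injective (mul_add_val_injective b)).hasSum
  have hsplit := (hasSum_of_residueClasses hclass).unique total
  have hterm (b : ZMod N) (hb : b ≠ 0) : |weightedTheta α β (ZMod.toAddCircle b) t| ≤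
      2 * (|α| + |β|) * rexp (-(t / N ^ 2)) * ∑' m : ℤ, F (m * N + b.val) := by
    refine abs_weightedTheta_le α β ht hb ((hclass b).congr_fun fun m ↦ (if_neg fun h ↦ hb ?_).symm)
    simpa using congr_arg (Int.cast : ℤ → ZMod N) h
  calc ∑ b ∈ ({0}ᶜ : Finset (ZMod N)), |weightedTheta α β (ZMod.toAddCircle b) t|
      ≤ ∑ b ∈ ({0}ᶜ : Finset (ZMod N)),
          2 * (|α| + |β|) * rexp (-(t / N ^ 2)) * ∑' m : ℤ, F (m * N + b.val) :=
        Finset.sum_le_sum fun b hb ↦ hterm b (by simpa using hb)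
    _ ≤ ∑ b : ZMod N, 2 * (|α| + |β|) * rexp (-(t / N ^ 2)) * ∑' m : ℤ, F (m * N + b.val) :=
        Finset.sum_le_sum_of_subset_of_nonneg (Finset.subset_univ _) fun b _ _ ↦
          mul_nonneg (by positivity) (tsum_nonneg fun m ↦ hF0 _)
    _ ≤ 2 * (|α| + |β|) * rexp (-(t / N ^ 2)) * (2 * (1 / (√t / N))) := by
        rw [← Finset.mul_sum, hsplit]
        gcongr
        exact exp_neg_mul_inv_one_sub_le hδ
    _ = 4 * (|α| + |β|) * (N / √t * rexp (-(t / N ^ 2))) := by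
        rw [one_div_div]
        ring

end Theta

section FunctionalEquation

open HurwitzZeta
open scoped ComplexConjugate ZMod

variable {N : ℕ} [NeZero N]

lemma cexp_eq_stdAddChar_mul (b c : ZMod N) (m : ℤ) :
    cexp (2 * π * I * ((b.val / N : ℝ) : ℂ) * ((m * N + c.val : ℤ) : ℂ)) =
      ZMod.stdAddChar (b * c) := by
  have hbc : b * c = (((b.val : ℤ) * (m * N + c.val) : ℤ) : ZMod N) := by simp
  rw [hbc, ZMod.stdAddChar_coe]
  congr 1
  push_cast
  ring

lemma cosKernel_toAddCircle (b : ZMod N) {s : ℝ} (hs : 0 < s) :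
    (cosKernel (ZMod.toAddCircle b) s : ℂ) =
      ∑ c : ZMod N, ZMod.stdAddChar (b * c) * evenKernel (ZMod.toAddCircle c) (N ^ 2 * s) := by
  have hN : (0 : ℝ) < N := by exact_mod_cast NeZero.pos N
  rw [ZMod.toAddCircle_apply]
  refine (hasSum_int_cosKernel (b.val / N) hs).unique (hasSum_of_residueClasses fun c ↦ ?_)
  rw [ZMod.toAddCircle_apply]
  refine ((Complex.hasSum_ofReal.mpr (hasSum_int_evenKernel (c.val / N)
    (by positivity : 0 < N ^ 2 * s))).mul_left (ZMod.stdAddChar (b * c))).congr_fun fun m ↦ ?_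
  rw [cexp_eq_stdAddChar_mul]
  congr 3
  push_cast
  field_simp

lemma sinKernel_toAddCircle (b : ZMod N) {s : ℝ} (hs : 0 < s) :
    (sinKernel (ZMod.toAddCircle b) s : ℂ) =
      ∑ c : ZMod N,
        ZMod.stdAddChar (b * c) * (-I * N * oddKernel (ZMod.toAddCircle c) (N ^ 2 * s)) := by
  have hN : (0 : ℝ) < N := by exact_mod_cast NeZero.pos N
  rw [ZMod.toAddCircle_apply]
  refine (hasSum_int_sinKernel (b.val / N) hs).unique (hasSum_of_residueClasses fun c ↦ ?_)
  rw [ZMod.toAddCircle_apply]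
  refine (((Complex.hasSum_ofReal.mpr (hasSum_int_oddKernel (c.val / N)
    (by positivity : 0 < N ^ 2 * s))).mul_left (-I * N)).mul_left
      (ZMod.stdAddChar (b * c))).congr_fun fun m ↦ ?_
  have hexp : -π * ((m * N + c.val : ℤ) : ℝ) ^ 2 * s = -π * (m + c.val / N) ^ 2 * (N ^ 2 * s) := by
    push_cast
    field_simp
  have hlin : ((m * N + c.val : ℤ) : ℂ) = N * ((m + c.val / N : ℝ) : ℂ) := by
    have hN' : (N : ℂ) ≠ 0 := NeZero.ne _
    push_cast
    field_simp
  rw [cexp_eq_stdAddChar_mul, hexp, hlin, ofReal_mul]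
  ring

lemma sum_mul_sum_stdAddChar_mul (Φ G : ZMod N → ℂ) :
    ∑ b, Φ b * ∑ c, ZMod.stdAddChar (b * c) * G c = ∑ c, 𝓕 Φ (-c) * G c := by
  simp only [ZMod.dft_apply, Finset.mul_sum, Finset.sum_mul, mul_neg, neg_neg, smul_eq_mul]
  rw [Finset.sum_comm]
  exact Finset.sum_congr rfl fun c _ ↦ Finset.sum_congr rfl fun b _ ↦ by ring

lemma sum_mul_evenKernel (Φ : ZMod N → ℂ) {t : ℝ} (ht : 0 < t) :
    ∑ b, Φ b * evenKernel (ZMod.toAddCircle b) t =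
      (√t : ℂ)⁻¹ * ∑ c, 𝓕 Φ (-c) * evenKernel (ZMod.toAddCircle c) (N ^ 2 / t) := by
  have hcos (b : ZMod N) : (evenKernel (ZMod.toAddCircle b) t : ℂ) = (√t : ℂ)⁻¹ *
      ∑ c, ZMod.stdAddChar (b * c) * evenKernel (ZMod.toAddCircle c) (N ^ 2 / t) := by
    rw [evenKernel_functional_equation, ← Real.sqrt_eq_rpow, ofReal_mul,
      cosKernel_toAddCircle b (one_div_pos.mpr ht), mul_one_div, one_div, ofReal_inv]
  simp only [hcos, mul_left_comm _ (√t : ℂ)⁻¹, ← Finset.mul_sum, sum_mul_sum_stdAddChar_mul]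

lemma sum_mul_sqrt_mul_oddKernel (Φ : ZMod N → ℂ) {t : ℝ} (ht : 0 < t) :
    ∑ b, Φ b * (√t * oddKernel (ZMod.toAddCircle b) t : ℝ) =
      -I * (√t : ℂ)⁻¹ *
        ∑ c, 𝓕 Φ (-c) * (√(N ^ 2 / t) * oddKernel (ZMod.toAddCircle c) (N ^ 2 / t) : ℝ) := by
  have hst : (√t : ℂ) ≠ 0 := ofReal_ne_zero.mpr (Real.sqrt_pos.mpr ht).ne'
  have hpow : t ^ (3 / 2 : ℝ) = √t * √t * √t := by
    rw [Real.mul_self_sqrt ht.le, Real.sqrt_eq_rpow, show (3 / 2 : ℝ) = 1 + 1 / 2 by norm_num,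
      Real.rpow_one_add' ht.le (by norm_num)]
  have hsqrt : √(N ^ 2 / t) = N / √t := by
    rw [Real.sqrt_div' _ ht.le, Real.sqrt_sq (Nat.cast_nonneg N)]
  have hsin (b : ZMod N) : ((√t * oddKernel (ZMod.toAddCircle b) t : ℝ) : ℂ) =
      -I * (√t : ℂ)⁻¹ * ∑ c, ZMod.stdAddChar (b * c) *
        (√(N ^ 2 / t) * oddKernel (ZMod.toAddCircle c) (N ^ 2 / t) : ℝ) := by
    rw [oddKernel_functional_equation, ofReal_mul, ofReal_mul,
      sinKernel_toAddCircle b (one_div_pos.mpr ht), mul_one_div, hpow, hsqrt, Finset.mul_sum,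
      Finset.mul_sum, Finset.mul_sum]
    refine Finset.sum_congr rfl fun c _ ↦ ?_
    push_cast
    field_simp
  simp only [hsin, mul_left_comm _ (-I * (√t : ℂ)⁻¹), ← Finset.mul_sum,
    sum_mul_sum_stdAddChar_mul]

variable {χ : DirichletCharacter ℂ N}

lemma norm_gaussSum_of_isPrimitive (hχ : χ.IsPrimitive) :
    ‖gaussSum χ (ZMod.stdAddChar (N := N))‖ = √N := by
  set τ := gaussSum χ (ZMod.stdAddChar (N := N)) with hτ
  have hterm (c : ZMod N) : τ * conj (χ c * ZMod.stdAddChar c) =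
      𝓕 χ (-c) * ZMod.stdAddChar (-c) := by
    rw [hχ.fourierTransform_eq_inv_mul_gaussSum, neg_neg, map_mul, ← AddChar.map_neg_eq_conj,
      ← MulChar.star_apply' χ c]
    simp only [RCLike.star_def]
    ring
  have hmul : τ * conj τ = N :=
    calc τ * conj τ = ∑ c, 𝓕 χ (-c) * ZMod.stdAddChar (-c) := by
          rw [hτ, gaussSum, map_sum, Finset.mul_sum]
          exact Finset.sum_congr rfl fun c _ ↦ hterm c
      _ = ∑ c, 𝓕 χ c * ZMod.stdAddChar c :=
          Fintype.sum_equiv (Equiv.neg _) _ _ fun _ ↦ rfl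
      _ = 𝓕 (𝓕 χ) (-1) := by
          rw [ZMod.dft_apply]
          exact Finset.sum_congr rfl fun c _ ↦ by simp [mul_comm]
      _ = N := by simp [ZMod.dft_dft]
  rw [Complex.mul_conj'] at hmul
  rw [← Real.sqrt_sq (norm_nonneg τ)]
  congr 1
  exact_mod_cast hmul

lemma sum_dft_mul_ofReal (hχ : χ.IsPrimitive) (L : ZMod N → ℝ) :
    ∑ c, 𝓕 χ (-c) * L c = gaussSum χ ZMod.stdAddChar * conj (∑ c, χ c * L c) := by
  rw [map_sum, Finset.mul_sum]
  refine Finset.sum_congr rfl fun c _ ↦ ?_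
  rw [hχ.fourierTransform_eq_inv_mul_gaussSum, neg_neg, map_mul, conj_ofReal,
    ← MulChar.star_apply' χ c]
  simp only [RCLike.star_def]
  ring

lemma sum_mul_oddKernel_eq_zero (hχ : χ.Even) (t : ℝ) :
    ∑ b, χ b * oddKernel (ZMod.toAddCircle b) t = 0 :=
  Function.Odd.sum_eq_zero <| hχ.to_fun.mul_odd fun b ↦ by simp [oddKernel_neg]

lemma sum_mul_evenKernel_eq_zero (hχ : χ.Odd) (t : ℝ) :
    ∑ b, χ b * evenKernel (ZMod.toAddCircle b) t = 0 :=
  Function.Odd.sum_eq_zero <| hχ.to_fun.mul_even fun b ↦ by simp [evenKernel_neg]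

/-- The theta series of a Dirichlet character, built from `weightedTheta` so that one expression
serves both parities. -/
noncomputable def twistedTheta (α β : ℝ) (χ : DirichletCharacter ℂ N) (t : ℝ) : ℂ :=
  ∑ b, χ b * weightedTheta α β (ZMod.toAddCircle b) t

lemma twistedTheta_of_even (hχ : χ.Even) (α β t : ℝ) :
    twistedTheta α β χ t = α * ∑ b, χ b * evenKernel (ZMod.toAddCircle b) t := by
  simp only [twistedTheta, weightedTheta, ofReal_add, ofReal_mul, mul_add, Finset.sum_add_distrib,
    mul_left_comm (χ _), ← Finset.mul_sum, sum_mul_oddKernel_eq_zero hχ, mul_zero, add_zero]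

lemma twistedTheta_of_odd (hχ : χ.Odd) (α β t : ℝ) :
    twistedTheta α β χ t =
      β * ∑ b, χ b * (√t * oddKernel (ZMod.toAddCircle b) t : ℝ) := by
  simp only [twistedTheta, weightedTheta, ofReal_add, ofReal_mul, mul_add, Finset.sum_add_distrib,
    mul_left_comm (χ _), ← Finset.mul_sum, sum_mul_evenKernel_eq_zero hχ, mul_zero, zero_add]

lemma twistedTheta_functional_equation (hχ : χ.IsPrimitive) (α β : ℝ) :
    ∃ ε : ℂ, ‖ε‖ = 1 ∧ ∀ t : ℝ, 0 < t →
      twistedTheta α β χ t = ε * (√N / √t) * conj (twistedTheta α β χ (N ^ 2 / t)) := by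
  have hN : (0 : ℝ) < √N := Real.sqrt_pos.mpr (by exact_mod_cast NeZero.pos N)
  have hN' : (√N : ℂ) ≠ 0 := ofReal_ne_zero.mpr hN.ne'
  have hroot : ‖gaussSum χ (ZMod.stdAddChar (N := N)) / √N‖ = 1 := by
    rw [norm_div, norm_gaussSum_of_isPrimitive hχ, Complex.norm_of_nonneg hN.le, div_self hN.ne']
  rcases χ.even_or_odd with heven | hodd
  · refine ⟨gaussSum χ ZMod.stdAddChar / √N, hroot, fun t ht ↦ ?_⟩
    rw [twistedTheta_of_even heven, twistedTheta_of_even heven, sum_mul_evenKernel _ ht,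
      sum_dft_mul_ofReal hχ, map_mul, conj_ofReal]
    field_simp
  · refine ⟨-I * (gaussSum χ ZMod.stdAddChar / √N), by simpa using hroot, fun t ht ↦ ?_⟩
    rw [twistedTheta_of_odd hodd, twistedTheta_of_odd hodd, sum_mul_sqrt_mul_oddKernel _ ht,
      sum_dft_mul_ofReal hχ, map_mul, conj_ofReal]
    field_simp

end FunctionalEquation

section LogarithmicVariable

open HurwitzZeta
open scoped ComplexConjugate

variable {N : ℕ} [NeZero N]

/-- `weightedTheta` in the variable `x = log (t / N)`, normalised so that the functional equation
of its twists by primitive characters becomes a symmetry under `x ↦ -x`. -/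
noncomputable def logTheta (α β : ℝ) (b : ZMod N) (x : ℝ) : ℝ :=
  rexp (x / 4) * weightedTheta α β (ZMod.toAddCircle b) (N * rexp x)

/-- The twist of `logTheta` by a Dirichlet character; its integral over `ℝ` is a completed
central `L`-value. -/
noncomputable def twistedLogTheta (α β : ℝ) (χ : DirichletCharacter ℂ N) (x : ℝ) : ℂ :=
  ∑ b, χ b * logTheta α β b x

lemma twistedLogTheta_eq (α β : ℝ) (χ : DirichletCharacter ℂ N) (x : ℝ) :
    twistedLogTheta α β χ x = rexp (x / 4) * twistedTheta α β χ (N * rexp x) := by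
  simp only [twistedLogTheta, twistedTheta, logTheta, ofReal_mul, mul_left_comm, ← Finset.mul_sum]

lemma continuous_logTheta (α β : ℝ) (b : ZMod N) : Continuous (logTheta α β b) := by
  have hmem (x : ℝ) : N * rexp x ∈ Set.Ioi (0 : ℝ) :=
    mul_pos (by exact_mod_cast NeZero.pos N) (Real.exp_pos x)
  have heven : Continuous fun x ↦ evenKernel (ZMod.toAddCircle b) (N * rexp x) :=
    (continuousOn_evenKernel _).comp_continuous (by fun_prop) hmem
  have hodd : Continuous fun x ↦ oddKernel (ZMod.toAddCircle b) (N * rexp x) :=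
    (continuousOn_oddKernel _).comp_continuous (by fun_prop) hmem
  unfold logTheta weightedTheta
  fun_prop

lemma continuous_twistedLogTheta (α β : ℝ) (χ : DirichletCharacter ℂ N) :
    Continuous (twistedLogTheta α β χ) :=
  continuous_finsetSum _ fun b _ ↦
    continuous_const.mul (continuous_ofReal.comp (continuous_logTheta α β b))

lemma isSelfDual_twistedLogTheta {χ : DirichletCharacter ℂ N} (hχ : χ.IsPrimitive) (α β : ℝ) :
    IsSelfDual (twistedLogTheta α β χ) := by
  have hN : (0 : ℝ) < N := by exact_mod_cast NeZero.pos N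
  obtain ⟨ε, hε, hfe⟩ := twistedTheta_functional_equation hχ α β
  refine ⟨ε, hε, fun x ↦ ?_⟩
  have hinv : (N : ℝ) ^ 2 / (N * rexp (-x)) = N * rexp x := by
    rw [Real.exp_neg]
    field_simp
  have hfactor : rexp (-x / 4) * (√N / √(N * rexp (-x))) = rexp (x / 4) := by
    rw [Real.sqrt_mul hN.le, ← Real.exp_half, div_mul_cancel_left₀ (Real.sqrt_pos.mpr hN).ne',
      ← Real.exp_neg, ← Real.exp_add]
    congr 1
    ring
  rw [twistedLogTheta_eq, twistedLogTheta_eq, hfe _ (by positivity), hinv, map_mul, conj_ofReal,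
    ← hfactor]
  push_cast
  ring

lemma sum_abs_logTheta_le (α β x : ℝ) :
    ∑ b ∈ ({0}ᶜ : Finset (ZMod N)), |logTheta α β b x| ≤
      4 * (|α| + |β|) * √N * decayWeight (1 / 4) N x := by
  have hN : (0 : ℝ) < N := by exact_mod_cast NeZero.pos N
  have hexp : N * rexp x / N ^ 2 = rexp x / N := by field_simp
  have hfactor : rexp (x / 4) * (N / √(N * rexp x)) = √N * rexp (-(1 / 4 * x)) := by
    rw [Real.sqrt_mul hN.le, ← Real.exp_half, ← div_div, Real.div_sqrt, mul_div_left_comm,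
      ← Real.exp_sub]
    congr 2
    ring
  simp only [logTheta, abs_mul, Real.abs_exp, ← Finset.mul_sum]
  calc rexp (x / 4) *
        ∑ b ∈ ({0}ᶜ : Finset (ZMod N)), |weightedTheta α β (ZMod.toAddCircle b) (N * rexp x)|
      ≤ rexp (x / 4) * (4 * (|α| + |β|) *
          (N / √(N * rexp x) * rexp (-(N * rexp x / N ^ 2)))) := by
        gcongr
        exact sum_abs_weightedTheta_le α β (by positivity)
    _ = 4 * (|α| + |β|) * (rexp (x / 4) * (N / √(N * rexp x))) * rexp (-(rexp x / N)) := by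
        rw [hexp]
        ring
    _ = 4 * (|α| + |β|) * √N * decayWeight (1 / 4) N x := by
        rw [hfactor, decayWeight]
        ring

end LogarithmicVariable

section CharacterSums

open scoped ComplexConjugate

variable {N : ℕ} [NeZero N]

/-- The `ℓ¹`-norm of `a ↦ ∑ χ ∈ S, χ a`, which measures the failure of orthogonality for an
incomplete set `S` of characters. -/
noncomputable def charSumNorm (S : Finset (DirichletCharacter ℂ N)) : ℝ :=
  ∑ a, ‖∑ χ ∈ S, χ a‖

lemma charSumNorm_nonneg (S : Finset (DirichletCharacter ℂ N)) : 0 ≤ charSumNorm S :=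
  Finset.sum_nonneg fun _ _ ↦ norm_nonneg _

lemma sum_norm_one_apply :
    ∑ a : ZMod N, ‖(1 : DirichletCharacter ℂ N) a‖ = N.totient := by
  have hnorm (a : ZMod N) : ‖(1 : DirichletCharacter ℂ N) a‖ = (1 : MulChar (ZMod N) ℝ) a := by
    by_cases ha : IsUnit a
    · simp [MulChar.one_apply ha]
    · simp [MulChar.map_nonunit _ ha]
  simp only [hnorm]
  rw [MulChar.sum_one_eq_card_units, ZMod.card_units_eq_totient]

open scoped Classical in
lemma charSumNorm_compl_one_le :
    charSumNorm ({1}ᶜ : Finset (DirichletCharacter ℂ N)) ≤ 2 * N.totient := by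
  have horth (a : ZMod N) : ∑ χ ∈ ({1}ᶜ : Finset (DirichletCharacter ℂ N)), χ a =
      (if a = 1 then (N.totient : ℂ) else 0) - (1 : DirichletCharacter ℂ N) a := by
    rw [← DirichletCharacter.sum_characters_eq, ← Finset.sum_compl_add_sum {1},
      Finset.sum_singleton, add_sub_cancel_right]
  calc charSumNorm ({1}ᶜ : Finset (DirichletCharacter ℂ N))
      ≤ ∑ a : ZMod N, ((if a = 1 then (N.totient : ℝ) else 0) +
          ‖(1 : DirichletCharacter ℂ N) a‖) := by
        refine Finset.sum_le_sum fun a _ ↦ ?_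
        rw [horth]
        refine (norm_sub_le _ _).trans_eq ?_
        split_ifs <;> simp
    _ = 2 * N.totient := by
        rw [Finset.sum_add_distrib, sum_norm_one_apply, Finset.sum_ite_eq' Finset.univ,
          if_pos (Finset.mem_univ _), two_mul]

lemma sum_norm_sum_mul_conj_le (S : Finset (DirichletCharacter ℂ N)) (b c : ZMod N) :
    ∑ a, ‖∑ χ ∈ S, χ a * (χ b * conj (χ c))‖ ≤ charSumNorm S := by
  have hconj (χ : DirichletCharacter ℂ N) : conj (χ c) = χ⁻¹ c := MulChar.star_apply' χ c
  by_cases hunit : IsUnit b ∧ IsUnit c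
  · obtain ⟨⟨u, rfl⟩, ⟨v, rfl⟩⟩ := hunit
    have hshift (χ : DirichletCharacter ℂ N) (a : ZMod N) :
        χ a * (χ u * conj (χ v)) = χ (a * ↑(u * v⁻¹)) := by
      rw [hconj, MulChar.inv_apply, Ring.inverse_unit, Units.val_mul, map_mul, map_mul]
    simp only [hshift]
    exact (Fintype.sum_equiv (Units.mulRight (u * v⁻¹)) _
      (fun a : ZMod N ↦ ‖∑ χ ∈ S, χ a‖) fun _ ↦ rfl).le
  · have hzero (χ : DirichletCharacter ℂ N) : χ b * conj (χ c) = 0 := by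
      rcases not_and_or.mp hunit with h | h
      · rw [MulChar.map_nonunit χ h, zero_mul]
      · rw [hconj, MulChar.map_nonunit _ h, mul_zero]
    simpa [hzero] using charSumNorm_nonneg S

lemma sum_char_mul_eq_sum_compl_zero (hN : N ≠ 1) (χ : DirichletCharacter ℂ N) (f : ZMod N → ℂ) :
    ∑ b, χ b * f b = ∑ b ∈ ({0}ᶜ : Finset (ZMod N)), χ b * f b := by
  rw [← Finset.sum_compl_add_sum {0}, Finset.sum_singleton, χ.map_zero' hN, zero_mul, add_zero]

lemma sum_norm_sum_twist_mul_conj_twist_le (hN : N ≠ 1) (S : Finset (DirichletCharacter ℂ N))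
    (f g : ZMod N → ℂ) :
    ∑ a, ‖∑ χ ∈ S, χ a * ((∑ b, χ b * f b) * conj (∑ c, χ c * g c))‖ ≤
      charSumNorm S * ((∑ b ∈ ({0}ᶜ : Finset (ZMod N)), ‖f b‖) *
        ∑ c ∈ ({0}ᶜ : Finset (ZMod N)), ‖g c‖) := by
  have hexpand (a : ZMod N) :
      ∑ χ ∈ S, χ a * ((∑ b, χ b * f b) * conj (∑ c, χ c * g c)) =
        ∑ b ∈ ({0}ᶜ : Finset (ZMod N)), ∑ c ∈ ({0}ᶜ : Finset (ZMod N)),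
          f b * conj (g c) * ∑ χ ∈ S, χ a * (χ b * conj (χ c)) := by
    simp only [sum_char_mul_eq_sum_compl_zero hN, map_sum, map_mul, Finset.sum_mul_sum]
    simp only [Finset.mul_sum]
    rw [Finset.sum_comm]
    refine Finset.sum_congr rfl fun b _ ↦ ?_
    rw [Finset.sum_comm]
    exact Finset.sum_congr rfl fun c _ ↦ Finset.sum_congr rfl fun χ _ ↦ by ring
  calc _ ≤ ∑ a, ∑ b ∈ ({0}ᶜ : Finset (ZMod N)), ∑ c ∈ ({0}ᶜ : Finset (ZMod N)),
          ‖f b‖ * ‖g c‖ * ‖∑ χ ∈ S, χ a * (χ b * conj (χ c))‖ := by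
        refine Finset.sum_le_sum fun a _ ↦ ?_
        rw [hexpand]
        refine (norm_sum_le _ _).trans (Finset.sum_le_sum fun b _ ↦ ?_)
        refine (norm_sum_le _ _).trans_eq (Finset.sum_congr rfl fun c _ ↦ ?_)
        rw [norm_mul, norm_mul, RCLike.norm_conj]
    _ = ∑ b ∈ ({0}ᶜ : Finset (ZMod N)), ∑ c ∈ ({0}ᶜ : Finset (ZMod N)),
          ‖f b‖ * ‖g c‖ * ∑ a, ‖∑ χ ∈ S, χ a * (χ b * conj (χ c))‖ := by
        simp only [Finset.mul_sum]
        rw [Finset.sum_comm]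
        exact Finset.sum_congr rfl fun b _ ↦ Finset.sum_comm
    _ ≤ ∑ b ∈ ({0}ᶜ : Finset (ZMod N)), ∑ c ∈ ({0}ᶜ : Finset (ZMod N)),
          ‖f b‖ * ‖g c‖ * charSumNorm S := by
        gcongr
        exact sum_norm_sum_mul_conj_le S _ _
    _ = _ := by
        simp only [← Finset.sum_mul, ← Finset.mul_sum]
        ring

lemma norm_twist_le (hN : N ≠ 1) (χ : DirichletCharacter ℂ N) (f : ZMod N → ℂ) :
    ‖∑ b, χ b * f b‖ ≤ ∑ b ∈ ({0}ᶜ : Finset (ZMod N)), ‖f b‖ := by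
  rw [sum_char_mul_eq_sum_compl_zero hN]
  refine (norm_sum_le _ _).trans (Finset.sum_le_sum fun b _ ↦ ?_)
  rw [norm_mul]
  exact mul_le_of_le_one_left (norm_nonneg _) (χ.norm_le_one b)

lemma sum_norm_sum_integral_twistedLogTheta_sq_le (hN : N ≠ 1) (α β : ℝ)
    {S : Finset (DirichletCharacter ℂ N)} (hS : ∀ χ ∈ S, χ.IsPrimitive) :
    ∑ a, ‖∑ χ ∈ S, χ a * (‖∫ x, twistedLogTheta α β χ x‖ : ℂ) ^ 2‖ ≤
      256 * (|α| + |β|) ^ 2 * charSumNorm S * (N * (Real.log N + 1)) := by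
  set A : ℝ := 4 * (|α| + |β|) * √N with hA
  have hsum (x : ℝ) : ∑ b ∈ ({0}ᶜ : Finset (ZMod N)), ‖(logTheta α β b x : ℂ)‖ ≤
      A * decayWeight (1 / 4) N x := by
    simpa only [Complex.norm_real, Real.norm_eq_abs] using sum_abs_logTheta_le α β x
  have hmix (x y : ℝ) :
      ∑ a, ‖∑ χ ∈ S, χ a * (twistedLogTheta α β χ x * conj (twistedLogTheta α β χ y))‖ ≤
        charSumNorm S * A ^ 2 * (decayWeight (1 / 4) N x * decayWeight (1 / 4) N y) :=
    calc _ ≤ charSumNorm S * ((∑ b ∈ ({0}ᶜ : Finset (ZMod N)), ‖(logTheta α β b x : ℂ)‖) *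
          ∑ c ∈ ({0}ᶜ : Finset (ZMod N)), ‖(logTheta α β c y : ℂ)‖) :=
          sum_norm_sum_twist_mul_conj_twist_le hN S _ _
      _ ≤ charSumNorm S * ((A * decayWeight (1 / 4) N x) * (A * decayWeight (1 / 4) N y)) := by
          have := charSumNorm_nonneg S
          have := decayWeight_nonneg (1 / 4) N x
          gcongr <;> exact hsum _
      _ = _ := by ring
  refine (sum_norm_sum_norm_integral_sq_le (by exact_mod_cast NeZero.one_le) (by norm_num)
    (by positivity) (mul_nonneg (charSumNorm_nonneg S) (sq_nonneg A))
    (fun χ hχ ↦ isSelfDual_twistedLogTheta (hS χ hχ) α β)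
    (fun χ _ ↦ continuous_twistedLogTheta α β χ)
    (fun χ _ x ↦ (norm_twist_le hN χ _).trans (hsum x)) hmix).trans_eq ?_
  rw [hA, mul_pow, Real.sq_sqrt (Nat.cast_nonneg N)]
  ring

end CharacterSums

section CentralValue

open HurwitzZeta MeasureTheory

lemma mellin_ofReal_eq_integral_exp {E : Type*} [NormedAddCommGroup E] [NormedSpace ℂ E]
    (f : ℝ → E) (s : ℝ) {c : ℝ} (hc : 0 < c) :
    mellin f s = c ^ s • ∫ x, rexp (s * x) • f (c * rexp x) := by
  have hscale : mellin f s = (c : ℂ) ^ (s : ℂ) • mellin (fun t ↦ f (c * t)) s := by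
    rw [mellin_comp_mul_left f s hc, smul_smul, ← cpow_add _ _ (ofReal_ne_zero.mpr hc.ne'),
      add_neg_cancel, cpow_zero, one_smul]
  have hzero (g : ℝ → E) : FourierTransform.fourier g (0 : ℝ) = ∫ x, g x := by
    simp [Real.fourier_eq]
  rw [hscale, mellin_eq_fourier, ← ofReal_cpow hc.le, Complex.coe_smul, ofReal_im, zero_div, hzero,
    ← integral_neg_eq_self]
  simp only [ofReal_re, neg_mul_neg, neg_neg]

lemma mellin_sqrt_smul {E : Type*} [NormedAddCommGroup E] [NormedSpace ℂ E] (f : ℝ → E) (s : ℂ) :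
    mellin (fun t ↦ √t • f t) s = mellin f (s + 1 / 2) := by
  rw [← mellin_cpow_smul]
  refine setIntegral_congr_fun measurableSet_Ioi fun t ht ↦ ?_
  have hsqrt : (t : ℂ) ^ (1 / 2 : ℂ) = (√t : ℂ) := by
    rw [Real.sqrt_eq_rpow, ofReal_cpow (le_of_lt ht)]
    norm_num
  simp only [hsqrt, Complex.coe_smul]

section WeakFEPair

variable {ι E : Type*} [NormedAddCommGroup E] [NormedSpace ℂ E] {S : Finset ι}
  {P : ι → WeakFEPair E} {c : ι → ℂ} {k : ℝ} {ε : ℂ}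

lemma sum_smul_f_modif (hk : ∀ i ∈ S, (P i).k = k) (hε : ∀ i ∈ S, (P i).ε = ε)
    (hf₀ : ∑ i ∈ S, c i • (P i).f₀ = 0) (hg₀ : ∑ i ∈ S, c i • (P i).g₀ = 0)
    {t : ℝ} (ht : 0 < t) (ht1 : t ≠ 1) :
    ∑ i ∈ S, c i • (P i).f_modif t = ∑ i ∈ S, c i • (P i).f t := by
  rcases ht1.lt_or_gt with hlt | hgt
  · have hmodif : ∀ i ∈ S, c i • (P i).f_modif t =
        c i • (P i).f t - (ε * ↑(t ^ (-k))) • c i • (P i).g₀ := fun i hi ↦ by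
      rw [WeakFEPair.f_modif, Pi.add_apply, Set.indicator_of_notMem (Set.notMem_Ioi.mpr hlt.le),
        Set.indicator_of_mem (Set.mem_Ioo.mpr ⟨ht, hlt⟩), zero_add, hk i hi, hε i hi, smul_sub,
        smul_comm (c i)]
    rw [Finset.sum_congr rfl hmodif, Finset.sum_sub_distrib, ← Finset.smul_sum, hg₀, smul_zero,
      sub_zero]
  · have hmodif : ∀ i ∈ S, c i • (P i).f_modif t = c i • (P i).f t - c i • (P i).f₀ :=
      fun i _ ↦ by
        rw [WeakFEPair.f_modif, Pi.add_apply, Set.indicator_of_mem (Set.mem_Ioi.mpr hgt),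
          Set.indicator_of_notMem fun h ↦ h.2.not_gt hgt, add_zero, smul_sub]
    rw [Finset.sum_congr rfl hmodif, Finset.sum_sub_distrib, hf₀, sub_zero]

lemma sum_smul_Λ_eq_mellin (hk : ∀ i ∈ S, (P i).k = k) (hε : ∀ i ∈ S, (P i).ε = ε)
    (hf₀ : ∑ i ∈ S, c i • (P i).f₀ = 0) (hg₀ : ∑ i ∈ S, c i • (P i).g₀ = 0) (s : ℂ) :
    ∑ i ∈ S, c i • (P i).Λ s = mellin (fun t ↦ ∑ i ∈ S, c i • (P i).f t) s := by
  have hΛ : ∀ i ∈ S, c i • (P i).Λ s = c i • mellin (P i).f_modif s -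
      (1 / s) • c i • (P i).f₀ - (ε / (k - s)) • c i • (P i).g₀ := fun i hi ↦ by
    rw [WeakFEPair.Λ, WeakFEPair.Λ₀, hk i hi, hε i hi, smul_sub, smul_sub, smul_comm (c i),
      smul_comm (c i)]
  have hint (i : ι) : IntegrableOn (fun t : ℝ ↦ (t : ℂ) ^ (s - 1) • c i • (P i).f_modif t)
      (Set.Ioi 0) :=
    MellinConvergent.const_smul ((P i).isStrongFEPair_toStrongFEPair.hasMellin s).1 (c i)
  rw [Finset.sum_congr rfl hΛ, Finset.sum_sub_distrib, Finset.sum_sub_distrib, ← Finset.smul_sum,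
    ← Finset.smul_sum, hf₀, hg₀, smul_zero, smul_zero, sub_zero, sub_zero]
  simp_rw [← mellin_const_smul]
  unfold mellin
  rw [← integral_finsetSum _ fun i _ ↦ hint i]
  refine integral_congr_ae ?_
  filter_upwards [ae_restrict_of_ae (Measure.ae_ne volume (1 : ℝ)),
    ae_restrict_mem measurableSet_Ioi] with t ht1 ht
  rw [← Finset.smul_sum, sum_smul_f_modif hk hε hf₀ hg₀ ht ht1]

end WeakFEPair

variable {N : ℕ} [NeZero N] {χ : DirichletCharacter ℂ N}

lemma sum_mul_completedHurwitzZetaEven (hχ : χ ≠ 1) (s : ℂ) :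
    ∑ b, χ b * completedHurwitzZetaEven (ZMod.toAddCircle b) s =
      mellin (fun t ↦ ∑ b, χ b * evenKernel (ZMod.toAddCircle b) t) (s / 2) / 2 := by
  have hN : N ≠ 1 := by
    rintro rfl
    exact hχ (DirichletCharacter.level_one χ)
  simp only [completedHurwitzZetaEven, ← mul_div_assoc, ← Finset.sum_div]
  congr 1
  refine sum_smul_Λ_eq_mellin (P := fun b : ZMod N ↦ hurwitzEvenFEPair (ZMod.toAddCircle b))
    (c := χ) (fun _ _ ↦ rfl) (fun _ _ ↦ rfl) ?_ ?_ _
  · simp [hurwitzEvenFEPair, ZMod.toAddCircle_eq_zero, χ.map_zero' hN]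
  · simpa [hurwitzEvenFEPair] using MulChar.sum_eq_zero_of_ne_one hχ

lemma sum_mul_completedHurwitzZetaOdd (χ : DirichletCharacter ℂ N) (s : ℂ) :
    ∑ b, χ b * completedHurwitzZetaOdd (ZMod.toAddCircle b) s =
      mellin (fun t ↦ ∑ b, χ b * oddKernel (ZMod.toAddCircle b) t) ((s + 1) / 2) / 2 := by
  simp only [completedHurwitzZetaOdd, ← mul_div_assoc, ← Finset.sum_div]
  congr 1
  exact sum_smul_Λ_eq_mellin (P := fun b : ZMod N ↦ hurwitzOddFEPair (ZMod.toAddCircle b))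
    (c := χ) (fun _ _ ↦ rfl) (fun _ _ ↦ rfl) (by simp [hurwitzOddFEPair])
    (by simp [hurwitzOddFEPair]) _

/-- The archimedean factor relating `L(1/2, χ)` to the Mellin transform of its theta series, for
even `χ`. -/
noncomputable def evenCentralFactor : ℝ := ‖2 * Gammaℝ (1 / 2)‖⁻¹

/-- The archimedean factor relating `L(1/2, χ)` to the Mellin transform of its theta series, for
odd `χ`. -/
noncomputable def oddCentralFactor : ℝ := ‖2 * Gammaℝ (3 / 2)‖⁻¹

lemma evenCentralFactor_pos : 0 < evenCentralFactor :=
  inv_pos.mpr <| norm_pos_iff.mpr <|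
    mul_ne_zero two_ne_zero (Gammaℝ_ne_zero_of_re_pos (by norm_num))

lemma oddCentralFactor_pos : 0 < oddCentralFactor :=
  inv_pos.mpr <| norm_pos_iff.mpr <|
    mul_ne_zero two_ne_zero (Gammaℝ_ne_zero_of_re_pos (by norm_num))

lemma norm_natCast_cpow_neg_half (n : ℕ) [NeZero n] : ‖(n : ℂ) ^ (-(1 / 2) : ℂ)‖ = (√n)⁻¹ := by
  rw [norm_natCast_cpow_of_pos (NeZero.pos n), Real.sqrt_eq_rpow,
    ← Real.rpow_neg (Nat.cast_nonneg n)]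
  norm_num

lemma norm_LFunction_half_of_even (heven : χ.Even) (hχ : χ ≠ 1) (β : ℝ) :
    ‖χ.LFunction (1 / 2)‖ =
      (√N)⁻¹ * ‖mellin (twistedTheta evenCentralFactor β χ) ((1 / 4 : ℝ) : ℂ)‖ := by
  have hs : (1 / 2 / 2 : ℂ) = ((1 / 4 : ℝ) : ℂ) := by norm_num
  rw [χ.LFunction_eq_completed_div_gammaFactor _ (.inl (by norm_num)), heven.gammaFactor_def,
    DirichletCharacter.completedLFunction, ZMod.completedLFunction_def_even heven.to_fun,
    sum_mul_completedHurwitzZetaEven hχ, hs]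
  simp only [funext (twistedTheta_of_even heven evenCentralFactor β), ← smul_eq_mul (ofReal _),
    mellin_const_smul, norm_div, norm_mul, norm_smul, norm_natCast_cpow_neg_half]
  rw [Complex.norm_of_nonneg evenCentralFactor_pos.le, evenCentralFactor, norm_mul]
  ring

lemma norm_LFunction_half_of_odd (hodd : χ.Odd) (α : ℝ) :
    ‖χ.LFunction (1 / 2)‖ =
      (√N)⁻¹ * ‖mellin (twistedTheta α oddCentralFactor χ) ((1 / 4 : ℝ) : ℂ)‖ := by
  have hs : ((1 / 2 + 1) / 2 : ℂ) = ((1 / 4 : ℝ) : ℂ) + 1 / 2 := by norm_num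
  have hs' : (1 / 2 + 1 : ℂ) = 3 / 2 := by norm_num
  have htwist (t : ℝ) : √t • ∑ b, χ b * oddKernel (ZMod.toAddCircle b) t =
      ∑ b, χ b * (√t * oddKernel (ZMod.toAddCircle b) t : ℝ) := by
    simp only [Finset.smul_sum, Complex.real_smul, ofReal_mul, mul_left_comm]
  rw [χ.LFunction_eq_completed_div_gammaFactor _ (.inl (by norm_num)), hodd.gammaFactor_def,
    DirichletCharacter.completedLFunction, ZMod.completedLFunction_def_odd hodd.to_fun,
    sum_mul_completedHurwitzZetaOdd, hs, hs', ← mellin_sqrt_smul]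
  simp only [funext (twistedTheta_of_odd hodd α oddCentralFactor), ← smul_eq_mul (ofReal _),
    mellin_const_smul, norm_div, norm_mul, norm_smul, norm_natCast_cpow_neg_half, htwist]
  rw [Complex.norm_of_nonneg oddCentralFactor_pos.le, oddCentralFactor, norm_mul]
  ring

lemma norm_LFunction_half (hχ : χ ≠ 1) :
    ‖χ.LFunction (1 / 2)‖ = (√N)⁻¹ *
      ‖mellin (twistedTheta evenCentralFactor oddCentralFactor χ) ((1 / 4 : ℝ) : ℂ)‖ := by
  rcases χ.even_or_odd with heven | hodd
  · exact norm_LFunction_half_of_even heven hχ _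
  · exact norm_LFunction_half_of_odd hodd _

lemma mellin_twistedTheta_quarter (α β : ℝ) (χ : DirichletCharacter ℂ N) :
    mellin (twistedTheta α β χ) ((1 / 4 : ℝ) : ℂ) =
      (N : ℝ) ^ (1 / 4 : ℝ) • ∫ x, twistedLogTheta α β χ x := by
  rw [mellin_ofReal_eq_integral_exp _ _ (c := N) (by exact_mod_cast NeZero.pos N)]
  simp only [twistedLogTheta_eq, Complex.real_smul, one_div_mul_eq_div]

lemma sqrt_mul_norm_LFunction_half_sq (hχ : χ ≠ 1) :
    √N * ‖χ.LFunction (1 / 2)‖ ^ 2 =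
      ‖∫ x, twistedLogTheta evenCentralFactor oddCentralFactor χ x‖ ^ 2 := by
  have hN : (0 : ℝ) < N := by exact_mod_cast NeZero.pos N
  have hroot : ((N : ℝ) ^ (1 / 4 : ℝ)) ^ 2 = √N := by
    rw [← Real.rpow_mul_natCast hN.le, Real.sqrt_eq_rpow]
    norm_num
  rw [norm_LFunction_half hχ, mellin_twistedTheta_quarter, norm_smul, Real.norm_of_nonneg
    (by positivity), mul_pow, mul_pow, hroot]
  field_simp

end CentralValue

section SecondMoment

variable {N : ℕ} [NeZero N]

lemma ne_one_of_isPrimitive (hN : N ≠ 1) {χ : DirichletCharacter ℂ N} (hχ : χ.IsPrimitive) :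
    χ ≠ 1 := by
  rintro rfl
  exact hN (hχ.symm.trans (DirichletCharacter.conductor_one))

lemma isPrimitive_of_prime (hN : N.Prime) {χ : DirichletCharacter ℂ N} (hχ : χ ≠ 1) :
    χ.IsPrimitive :=
  (hN.eq_one_or_self_of_dvd _ χ.conductor_dvd_level).resolve_left fun h ↦
    hχ ((χ.eq_one_iff_conductor_eq_one).mpr h)

/-- The second moment of central `L`-values over a set `S` of characters mod `N`, twisted by the
values of the characters at `a` and normalised by `√N`. -/
noncomputable def twistedSecondMoment (S : Finset (DirichletCharacter ℂ N)) (a : ZMod N) : ℂ :=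
  ∑ χ ∈ S, χ a * (√N * ‖χ.LFunction (1 / 2)‖ ^ 2 : ℝ)

theorem sum_norm_twistedSecondMoment_le (hN : N ≠ 1) {S : Finset (DirichletCharacter ℂ N)}
    (hS : ∀ χ ∈ S, χ.IsPrimitive) :
    ∑ a, ‖twistedSecondMoment S a‖ ≤
      256 * (evenCentralFactor + oddCentralFactor) ^ 2 * charSumNorm S *
        (N * (Real.log N + 1)) := by
  have hmoment (a : ZMod N) : twistedSecondMoment S a = ∑ χ ∈ S, χ a *
      (‖∫ x, twistedLogTheta evenCentralFactor oddCentralFactor χ x‖ : ℂ) ^ 2 :=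
    Finset.sum_congr rfl fun χ hχ ↦ by
      rw [sqrt_mul_norm_LFunction_half_sq (ne_one_of_isPrimitive hN (hS χ hχ)), ofReal_pow]
  simpa only [hmoment, abs_of_pos evenCentralFactor_pos, abs_of_pos oddCentralFactor_pos] using
    sum_norm_sum_integral_twistedLogTheta_sq_le hN evenCentralFactor oddCentralFactor hS

lemma sum_Icc_natCast {M : Type*} [AddCommMonoid M] (f : ZMod N → M) :
    ∑ a ∈ Finset.Icc 1 N, f a = ∑ a, f a := by
  have hinj : Set.InjOn (fun a : ℕ ↦ (a : ZMod N)) (Finset.Icc 1 N) := fun a ha b hb hab ↦ by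
    rw [Finset.mem_coe, Finset.mem_Icc] at ha hb
    exact ((ZMod.natCast_eq_natCast_iff a b N).mp hab).eq_of_abs_lt (abs_lt.mpr (by omega))
  have hmaps : Set.MapsTo (fun a : ℕ ↦ (a : ZMod N)) (Finset.Icc 1 N)
      (Finset.univ : Finset (ZMod N)) := fun a _ ↦ Finset.mem_coe.mpr (Finset.mem_univ _)
  exact Finset.sum_nbij _ hmaps hinj
    (Finset.surjOn_of_injOn_of_card_le _ hmaps hinj (by simp [ZMod.card])) fun a _ ↦ rfl

open scoped Classical in
lemma Mtw_eq_inv_totient_mul_twistedSecondMoment (a : ℤ) :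
    Mtw a N = (N.totient : ℂ)⁻¹ * twistedSecondMoment {1}ᶜ (a : ZMod N) := by
  rw [Mtw, twistedSecondMoment, ← Finset.sum_compl_add_sum {1}, Finset.sum_singleton, if_pos rfl,
    add_zero, Finset.mul_sum, Finset.mul_sum]
  refine Finset.sum_congr rfl fun χ hχ ↦ ?_
  rw [if_neg (by simpa using hχ)]
  push_cast
  ring

open scoped Classical in
lemma sum_norm_Mtw :
    ∑ a ∈ Finset.Icc 1 N, ‖Mtw a N‖ =
      (N.totient : ℝ)⁻¹ * ∑ a : ZMod N, ‖twistedSecondMoment {1}ᶜ a‖ := by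
  rw [← sum_Icc_natCast, Finset.mul_sum]
  simp only [Mtw_eq_inv_totient_mul_twistedSecondMoment, norm_mul, norm_inv,
    Complex.norm_natCast, Int.cast_natCast]

lemma sum_norm_Mtw_le_of_prime (hN : N.Prime) :
    ∑ a ∈ Finset.Icc 1 N, ‖Mtw a N‖ ≤
      512 * (evenCentralFactor + oddCentralFactor) ^ 2 * (N * (Real.log N + 1)) := by
  classical
  have hφ : (0 : ℝ) < N.totient := by exact_mod_cast Nat.totient_pos.mpr hN.pos
  have hprim : ∀ χ ∈ ({1}ᶜ : Finset (DirichletCharacter ℂ N)), χ.IsPrimitive := fun χ hχ ↦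
    isPrimitive_of_prime hN (by simpa using hχ)
  set K := evenCentralFactor + oddCentralFactor
  calc ∑ a ∈ Finset.Icc 1 N, ‖Mtw a N‖
      = (N.totient : ℝ)⁻¹ * ∑ a : ZMod N, ‖twistedSecondMoment {1}ᶜ a‖ := by
        convert sum_norm_Mtw (N := N)
    _ ≤ (N.totient : ℝ)⁻¹ * (256 * K ^ 2 * charSumNorm {1}ᶜ * (N * (Real.log N + 1))) := by
        gcongr
        exact sum_norm_twistedSecondMoment_le hN.ne_one hprim
    _ ≤ (N.totient : ℝ)⁻¹ * (256 * K ^ 2 * (2 * N.totient) * (N * (Real.log N + 1))) := by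
        gcongr
        convert charSumNorm_compl_one_le (N := N)
    _ = 512 * K ^ 2 * (N * (Real.log N + 1)) := by
        field_simp
        ring

lemma log_add_one_le_three_mul_log {x : ℝ} (hx : 2 ≤ x) : Real.log x + 1 ≤ 3 * Real.log x := by
  have := Real.log_le_log two_pos hx
  linarith [Real.log_two_gt_d9]

end SecondMoment

/-- Lemma 4 of the paper: the first absolute moment of `M(a,q)` is `O(q log q)`. -/
theorem first_moment_bound :
    ∃ C : ℝ, 0 < C ∧
      ∀ (q : ℕ) (hq : q.Prime),
        haveI : NeZero q := ⟨hq.ne_zero⟩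
        ∑ a ∈ Finset.Icc 1 q, ‖Mtw a q‖ ≤ C * q * Real.log q := by
  set K := evenCentralFactor + oddCentralFactor
  have hK : 0 < K := add_pos evenCentralFactor_pos oddCentralFactor_pos
  refine ⟨1536 * K ^ 2, by positivity, fun q hq ↦ ?_⟩
  have : NeZero q := ⟨hq.ne_zero⟩
  calc ∑ a ∈ Finset.Icc 1 q, ‖Mtw a q‖
      ≤ 512 * K ^ 2 * (q * (Real.log q + 1)) := sum_norm_Mtw_le_of_prime hq
    _ ≤ 512 * K ^ 2 * (q * (3 * Real.log q)) := by
        gcongr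
        exact log_add_one_le_three_mul_log (by exact_mod_cast hq.two_le)
    _ = 1536 * K ^ 2 * q * Real.log q := by ring
end

section
/- Let h, k, q be pairwise coprime positive integers with q ≥ 4hk. Write {−h·inv_k(q)/k} = [0; b_1, …, b_r] and {−k·inv_h(q)/h} = [0; c_1, …, c_s] for continued fraction expansions with r and s even (such expansions exist; r = 0 or s = 0 is allowed, representing 0). Then there exists a positive integer d with q/(hk) − 2 < d ≤ q/(hk) such that {h·inv_q(k)/q} equals the value of the finite continued fraction [0; b_1, …, b_r, d, c_s, …, c_1] (all of whose partial quotients are positive integers). -/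
/-!
The convergents of `[0; a₁, …, aₙ]` are read off the product `M` of the symmetric matrices
`!![aᵢ, 1; 1, 0]`: the value is `M 1 0 / M 0 0`, reversing the list transposes `M`, and
`det M = 1` for `n` even. Hence the products belonging to `-h q̄ / k` and `-k q̄ / h` have
`M 0 0` equal to `k` and `h`, and their entries `M 0 1`, say `x < k` and `y < h`, satisfy
`q ≡ h x (mod k)` and `q ≡ k y (mod h)`. By the Chinese remainder theorem
`q = h x + k y + h k d`, and the right-hand side is the denominator of the glued continued
fraction. Its numerator `n` satisfies `k n = u q + h`, where `u` is the numerator of the first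
fraction, so `n ≡ h k̄ (mod q)`.
-/

open Real

/-- Value of a finite continued fraction `[a_0; a_1, …, a_n]`. -/
noncomputable def cfEval : List ℝ → ℝ
  | [] => 0
  | [a] => a
  | a :: b :: rest => a + 1/(cfEval (b :: rest))

section CommSemiring

variable {R S : Type*} [CommSemiring R] [CommSemiring S]

/-- The matrix `!![a, 1; 1, 0]` of the Möbius map `z ↦ a + 1 / z`, one step of a continued
fraction. -/
def cfStep (a : R) : Matrix (Fin 2) (Fin 2) R := !![a, 1; 1, 0]

/-- The continuant matrix of `[a₁, …, aₙ]`, the product of the step matrices. Its first column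
holds the denominator (row `0`) and the numerator (row `1`) of `[0; a₁, …, aₙ]`, its second
column those of `[0; a₁, …, aₙ₋₁]`. -/
def cfMatrix (l : List R) : Matrix (Fin 2) (Fin 2) R := (l.map cfStep).prod

@[simp]
lemma cfMatrix_nil : cfMatrix ([] : List R) = 1 := rfl

lemma cfMatrix_singleton (a : R) : cfMatrix [a] = cfStep a := by
  simp only [cfMatrix, List.map_cons, List.map_nil, List.prod_singleton]

lemma cfMatrix_cons (a : R) (l : List R) : cfMatrix (a :: l) = cfStep a * cfMatrix l := by
  simp only [cfMatrix, List.map_cons, List.prod_cons]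

lemma cfMatrix_cons_zero (a : R) (l : List R) (j : Fin 2) :
    cfMatrix (a :: l) 0 j = a * cfMatrix l 0 j + cfMatrix l 1 j := by
  simp [cfMatrix_cons, cfStep, Matrix.mul_apply]

lemma cfMatrix_cons_one (a : R) (l : List R) (j : Fin 2) :
    cfMatrix (a :: l) 1 j = cfMatrix l 0 j := by
  simp [cfMatrix_cons, cfStep, Matrix.mul_apply]

lemma cfMatrix_append (l m : List R) : cfMatrix (l ++ m) = cfMatrix l * cfMatrix m := by
  simp only [cfMatrix, List.map_append, List.prod_append]

lemma cfStep_transpose (a : R) : (cfStep a).transpose = cfStep a := by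
  ext i j; fin_cases i <;> fin_cases j <;> rfl

lemma cfMatrix_reverse (l : List R) : cfMatrix l.reverse = (cfMatrix l).transpose := by
  induction l with
  | nil => simp
  | cons a l ih =>
    rw [List.reverse_cons, cfMatrix_append, ih, cfMatrix_singleton, cfMatrix_cons,
      Matrix.transpose_mul, cfStep_transpose]

lemma cfMatrix_map (f : R →+* S) (l : List R) : cfMatrix (l.map f) = (cfMatrix l).map f := by
  induction l with
  | nil => simp
  | cons a l ih =>
    ext i j
    fin_cases i <;> simp [cfMatrix_cons_zero, cfMatrix_cons_one, ih]

lemma cfMatrix_map_natCast (l : List ℕ) (i j : Fin 2) :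
    cfMatrix (l.map (Nat.cast : ℕ → R)) i j = ((cfMatrix l i j : ℕ) : R) :=
  congrFun₂ (cfMatrix_map (Nat.castRingHom R) l) i j

lemma cfMatrix_glue_zero (b c : List R) (d : R) (i : Fin 2) :
    cfMatrix (b ++ [d] ++ c.reverse) i 0 =
      cfMatrix b i 0 * (cfMatrix c 0 0 * d + cfMatrix c 0 1) + cfMatrix b i 1 * cfMatrix c 0 0 := by
  simp only [cfMatrix_append, cfMatrix_reverse, cfMatrix_singleton, cfStep, Matrix.mul_apply,
    Fin.sum_univ_two, Matrix.transpose_apply, Matrix.of_apply, Matrix.cons_val]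
  ring

lemma mul_cfMatrix_glue_one_zero {b : List R} (c : List R) (d : R)
    (hdet : cfMatrix b 0 0 * cfMatrix b 1 1 = cfMatrix b 0 1 * cfMatrix b 1 0 + 1) :
    cfMatrix b 0 0 * cfMatrix (b ++ [d] ++ c.reverse) 1 0 =
      cfMatrix b 1 0 * cfMatrix (b ++ [d] ++ c.reverse) 0 0 + cfMatrix c 0 0 := by
  rw [cfMatrix_glue_zero, cfMatrix_glue_zero, mul_add, ← mul_assoc _ (cfMatrix b 1 1), hdet]
  ring

end CommSemiring

section CommRing

variable {R : Type*} [CommRing R]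

lemma det_cfMatrix (l : List R) : (cfMatrix l).det = (-1) ^ l.length := by
  induction l with
  | nil => simp
  | cons a l ih =>
    rw [cfMatrix_cons, Matrix.det_mul, ih, List.length_cons, pow_succ']
    simp [cfStep, Matrix.det_fin_two]

end CommRing

section Order

variable {R : Type*} [CommSemiring R] [PartialOrder R]

lemma cfMatrix_nonneg [IsOrderedRing R] {l : List R} (hl : ∀ x ∈ l, 0 ≤ x) (i j : Fin 2) :
    0 ≤ cfMatrix l i j := by
  induction l generalizing i with
  | nil => fin_cases i <;> fin_cases j <;> simp
  | cons a l ih =>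
    obtain ⟨ha, hl⟩ := List.forall_mem_cons.1 hl
    match i with
    | 0 => exact cfMatrix_cons_zero a l j ▸ add_nonneg (mul_nonneg ha (ih hl 0)) (ih hl 1)
    | 1 => exact cfMatrix_cons_one a l j ▸ ih hl 0

variable [IsStrictOrderedRing R]

lemma cfMatrix_zero_zero_pos {l : List R} (hl : ∀ x ∈ l, 0 < x) : 0 < cfMatrix l 0 0 := by
  induction l with
  | nil => simp
  | cons a l ih =>
    obtain ⟨ha, hl⟩ := List.forall_mem_cons.1 hl
    rw [cfMatrix_cons_zero]
    exact add_pos_of_pos_of_nonneg (mul_pos ha (ih hl))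
      (cfMatrix_nonneg (fun x hx ↦ (hl x hx).le) 1 0)

lemma cfMatrix_one_zero_lt_zero_zero {l : List R} (hl : ∀ x ∈ l, 1 ≤ x) (hlen : l.length ≠ 1) :
    cfMatrix l 1 0 < cfMatrix l 0 0 := by
  match l with
  | [] => simp
  | [_] => exact absurd rfl hlen
  | a :: a' :: l =>
    obtain ⟨ha, htail⟩ := List.forall_mem_cons.1 hl
    have hpos {m : List R} (hm : ∀ x ∈ m, 1 ≤ x) : 0 < cfMatrix m 0 0 :=
      cfMatrix_zero_zero_pos fun x hx ↦ zero_lt_one.trans_le (hm x hx)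
    calc cfMatrix (a :: a' :: l) 1 0
        = cfMatrix (a' :: l) 0 0 := cfMatrix_cons_one a _ 0
      _ ≤ a * cfMatrix (a' :: l) 0 0 := le_mul_of_one_le_left (hpos htail).le ha
      _ < a * cfMatrix (a' :: l) 0 0 + cfMatrix l 0 0 :=
        lt_add_of_pos_right _ (hpos (List.forall_mem_cons.1 htail).2)
      _ = cfMatrix (a :: a' :: l) 0 0 := by rw [cfMatrix_cons_zero a, cfMatrix_cons_one a']

lemma cfMatrix_zero_one_lt_zero_zero {l : List R} (hl : ∀ x ∈ l, 1 ≤ x) (hlen : l.length ≠ 1) :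
    cfMatrix l 0 1 < cfMatrix l 0 0 := by
  simpa only [cfMatrix_reverse, Matrix.transpose_apply] using
    cfMatrix_one_zero_lt_zero_zero (l := l.reverse) (by simpa only [List.mem_reverse] using hl)
      (by rwa [List.length_reverse])

end Order

lemma cfEval_cons (x : ℝ) (l : List ℝ) : cfEval (x :: l) = x + cfEval (0 :: l) := by
  cases l <;> simp [cfEval]

lemma cfEval_zero_cons {l : List ℝ} (hl : ∀ x ∈ l, 0 < x) :
    cfEval (0 :: l) = cfMatrix l 1 0 / cfMatrix l 0 0 := by
  induction l with
  | nil => simp [cfEval]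
  | cons a l ih =>
    have hl' := (List.forall_mem_cons.1 hl).2
    have hden := (cfMatrix_zero_zero_pos hl').ne'
    rw [cfEval, cfEval_cons, ih hl', cfMatrix_cons_zero, cfMatrix_cons_one, zero_add,
      add_div' _ _ _ hden, one_div_div]

lemma cfEval_zero_cons_natCast {l : List ℕ} (hl : ∀ x ∈ l, 0 < x) :
    cfEval (0 :: l.map Nat.cast) = ((cfMatrix l 1 0 : ℕ) : ℝ) / (cfMatrix l 0 0 : ℕ) := by
  rw [cfEval_zero_cons (by simpa using hl), cfMatrix_map_natCast, cfMatrix_map_natCast]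

section EvenLength

variable {l : List ℕ}

lemma cfMatrix_mul_eq_mul_add_one_of_even (hlen : Even l.length) :
    cfMatrix l 0 0 * cfMatrix l 1 1 = cfMatrix l 0 1 * cfMatrix l 1 0 + 1 := by
  have hdet := det_cfMatrix (l.map (Nat.cast : ℕ → ℤ))
  simp only [Matrix.det_fin_two, cfMatrix_map_natCast, List.length_map, hlen.neg_one_pow] at hdet
  zify
  linear_combination hdet

lemma cfMatrix_first_column_of_fract_eq {m : ℤ} {k : ℕ} (hk : 0 < k) (hm : IsCoprime m k)
    (hl : ∀ x ∈ l, 0 < x) (hlen : Even l.length)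
    (hfract : Int.fract ((m : ℝ) / k) = cfEval (0 :: l.map Nat.cast)) :
    cfMatrix l 0 0 = k ∧ ((cfMatrix l 1 0 : ℕ) : ℤ) = m % k := by
  have hdet := cfMatrix_mul_eq_mul_add_one_of_even hlen
  zify at hdet
  have hcop : IsCoprime ((cfMatrix l 1 0 : ℕ) : ℤ) (cfMatrix l 0 0 : ℕ) :=
    ⟨-(cfMatrix l 0 1 : ℕ), (cfMatrix l 1 1 : ℕ), by linear_combination hdet⟩
  have hmod : IsCoprime (m % k) (k : ℤ) := by
    rw [Int.emod_def, sub_eq_add_neg, ← mul_neg]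
    exact hm.add_mul_left_left _
  have heq : (((cfMatrix l 1 0 : ℕ) : ℤ) : ℚ) / ((cfMatrix l 0 0 : ℕ) : ℤ) =
      (m % k : ℤ) / (k : ℤ) := by
    rw [Int.fract_div_intCast_eq_div_intCast_mod, cfEval_zero_cons_natCast hl] at hfract
    rw [← Rat.cast_inj (α := ℝ)]
    simpa using hfract.symm
  obtain ⟨hnum, hden⟩ := Rat.div_int_inj (by exact_mod_cast cfMatrix_zero_zero_pos hl)
    (by exact_mod_cast hk) (Int.isCoprime_iff_gcd_eq_one.1 hcop)
    (Int.isCoprime_iff_gcd_eq_one.1 hmod) heq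
  exact ⟨by exact_mod_cast hden, hnum⟩

lemma mul_cfMatrix_zero_one_modEq {h k q : ℕ} {i : ℤ} (hlen : Even l.length)
    (hi : q * i ≡ 1 [ZMOD k]) (hden : cfMatrix l 0 0 = k)
    (hnum : (cfMatrix l 1 0 : ℕ) ≡ -h * i [ZMOD k]) :
    h * cfMatrix l 0 1 ≡ q [MOD k] := by
  have hdet := cfMatrix_mul_eq_mul_add_one_of_even hlen
  rw [hden] at hdet
  zify at hdet
  rw [← Int.natCast_modEq_iff]
  push_cast
  calc (h * (cfMatrix l 0 1 : ℕ) : ℤ)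
      ≡ h * (cfMatrix l 0 1 : ℕ) * (q * i) [ZMOD k] := by simpa using hi.symm.mul_left _
    _ = -(q * (cfMatrix l 0 1 : ℕ)) * (-h * i) := by ring
    _ ≡ -(q * (cfMatrix l 0 1 : ℕ)) * (cfMatrix l 1 0 : ℕ) [ZMOD k] := hnum.symm.mul_left _
    _ = q + k * (-q * (cfMatrix l 1 1 : ℕ)) := by linear_combination (q : ℤ) * hdet
    _ ≡ q [ZMOD k] := Int.modEq_add_fac_self

lemma cfMatrix_first_row_of_fract_eq {h k q : ℕ} {i : ℤ} (hk : 0 < k) (chk : h.Coprime k)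
    (hi : q * i ≡ 1 [ZMOD k]) (hl : ∀ x ∈ l, 0 < x) (hlen : Even l.length)
    (hfract : Int.fract ((-(h : ℝ) * i) / k) = cfEval (0 :: l.map Nat.cast)) :
    cfMatrix l 0 0 = k ∧ h * cfMatrix l 0 1 ≡ q [MOD k] := by
  have hicop : IsCoprime i k := by
    obtain ⟨t, ht⟩ := hi.dvd
    exact ⟨q, t, by linear_combination -ht⟩
  have hcop : IsCoprime (-h * i) k := (Nat.isCoprime_iff_coprime.2 chk).neg_left.mul_left hicop
  obtain ⟨hden, hnum⟩ :=
    cfMatrix_first_column_of_fract_eq hk hcop hl hlen (by exact_mod_cast hfract)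
  exact ⟨hden, mul_cfMatrix_zero_one_modEq hlen hi hden (hnum ▸ Int.mod_modEq _ _)⟩

end EvenLength

lemma exists_pos_eq_add_add_mul {h k q x y : ℕ} (chk : h.Coprime k) (hx : x < k) (hy : y < h)
    (hbig : 2 * h * k ≤ q) (hxq : h * x ≡ q [MOD k]) (hyq : k * y ≡ q [MOD h]) :
    ∃ d, 0 < d ∧ q = h * x + k * y + h * k * d := by
  have hmod : h * x + k * y ≡ q [MOD h * k] := by
    refine (Nat.modEq_and_modEq_iff_modEq_mul chk).1 ⟨?_, ?_⟩
    · simpa using (Nat.modEq_zero_iff_dvd.2 (dvd_mul_right h x)).add hyq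
    · simpa using hxq.add (Nat.modEq_zero_iff_dvd.2 (dvd_mul_right k y))
  have hhx : h * x < h * k := Nat.mul_lt_mul_of_pos_left hx (Nat.zero_lt_of_lt hy)
  have hky : k * y < k * h := Nat.mul_lt_mul_of_pos_left hy (Nat.zero_lt_of_lt hx)
  have hlt : h * x + k * y < q := by linarith
  obtain ⟨d, hd⟩ := (Nat.modEq_iff_dvd' hlt.le).1 hmod
  have hq : q = h * x + k * y + h * k * d := by omega
  refine ⟨d, Nat.pos_of_ne_zero ?_, hq⟩
  rintro rfl
  omega

lemma div_mul_bounds_of_eq_add_add_mul {h k q x y d : ℕ} (hx : x < k) (hy : y < h)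
    (hq : q = h * x + k * y + h * k * d) :
    (q : ℝ) / (h * k) - 2 < d ∧ (d : ℝ) ≤ q / (h * k) := by
  have hh : (0 : ℝ) < h := by exact_mod_cast Nat.zero_lt_of_lt hy
  have hk : (0 : ℝ) < k := by exact_mod_cast Nat.zero_lt_of_lt hx
  have hquot : (q : ℝ) / (h * k) = x / k + y / h + d := by
    rw [hq]
    push_cast
    field_simp
  have hxk : (x : ℝ) / k < 1 := (div_lt_one hk).2 (by exact_mod_cast hx)
  have hyh : (y : ℝ) / h < 1 := (div_lt_one hh).2 (by exact_mod_cast hy)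
  have hxk₀ : (0 : ℝ) ≤ x / k := by positivity
  have hyh₀ : (0 : ℝ) ≤ y / h := by positivity
  constructor <;> linarith

lemma fract_mul_div_eq_of_mul_eq {h k q u n : ℕ} {i : ℤ} (hu : u < k) (hhq : h < q)
    (hn : k * n = u * q + h) (hi : k * i ≡ 1 [ZMOD q]) :
    Int.fract ((h * i : ℝ) / q) = n / q := by
  have hnq : n < q := by
    refine Nat.lt_of_mul_lt_mul_left (a := k) ?_
    calc k * n = u * q + h := hn
      _ < (u + 1) * q := by linarith
      _ ≤ k * q := Nat.mul_le_mul_right q hu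
  have hmod : h * i ≡ n [ZMOD q] :=
    calc (h * i : ℤ)
        ≡ (h + q * u : ℤ) * i [ZMOD q] := Int.modEq_add_fac_self.symm.mul_right i
      _ = n * (k * i) := by zify at hn; linear_combination -i * hn
      _ ≡ n [ZMOD q] := by simpa using hi.mul_left n
  have hrem : (h * i : ℤ) % q = n := by
    rw [hmod.eq, Int.emod_eq_of_lt (by positivity) (by exact_mod_cast hnq)]
  simpa [hrem] using Int.fract_div_intCast_eq_div_intCast_mod (k := ℝ) (m := h * i) (n := q)

theorem continued_fraction_glueing_general (h k q : ℕ) (hh : 0 < h) (hk : 0 < k)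
    (chk : Nat.Coprime h k) (hbig : 2 * h * k ≤ q) (iqk iqh ikq : ℤ)
    (hiqk : (q : ℤ) * iqk ≡ 1 [ZMOD (k : ℤ)])
    (hiqh : (q : ℤ) * iqh ≡ 1 [ZMOD (h : ℤ)])
    (hikq : (k : ℤ) * ikq ≡ 1 [ZMOD (q : ℤ)])
    (b c : List ℕ) (hbpos : ∀ x ∈ b, 0 < x) (hcpos : ∀ x ∈ c, 0 < x)
    (hbe : Even b.length) (hce : Even c.length)
    (hbcf : Int.fract ((-(h : ℝ) * iqk) / k) = cfEval ((0 : ℝ) :: b.map Nat.cast))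
    (hccf : Int.fract ((-(k : ℝ) * iqh) / h) = cfEval ((0 : ℝ) :: c.map Nat.cast)) :
    ∃ d : ℕ, 0 < d ∧ (q : ℝ) / (h * k) - 2 < (d : ℝ) ∧ (d : ℝ) ≤ (q : ℝ) / (h * k) ∧
      Int.fract (((h : ℝ) * ikq) / q) =
        cfEval ((0 : ℝ) :: (b.map Nat.cast ++ [(d : ℝ)] ++ (c.map Nat.cast).reverse)) := by
  obtain ⟨hbk, hbq⟩ := cfMatrix_first_row_of_fract_eq hk chk hiqk hbpos hbe hbcf
  obtain ⟨hch, hcq⟩ := cfMatrix_first_row_of_fract_eq hh chk.symm hiqh hcpos hce hccf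
  have hblen : b.length ≠ 1 := by grind
  have hclen : c.length ≠ 1 := by grind
  have hu := hbk ▸ cfMatrix_one_zero_lt_zero_zero hbpos hblen
  have hx := hbk ▸ cfMatrix_zero_one_lt_zero_zero hbpos hblen
  have hy := hch ▸ cfMatrix_zero_one_lt_zero_zero hcpos hclen
  obtain ⟨d, hd, hq⟩ := exists_pos_eq_add_add_mul chk hx hy hbig hbq hcq
  obtain ⟨hdlower, hdupper⟩ := div_mul_bounds_of_eq_add_add_mul hx hy hq
  refine ⟨d, hd, hdlower, hdupper, ?_⟩
  have hden : cfMatrix (b ++ [d] ++ c.reverse) 0 0 = q := by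
    rw [cfMatrix_glue_zero, hbk, hch, hq]; ring
  have hnum := mul_cfMatrix_glue_one_zero c d (cfMatrix_mul_eq_mul_add_one_of_even hbe)
  rw [hbk, hch, hden] at hnum
  have hpos : ∀ x ∈ b ++ [d] ++ c.reverse, 0 < x := by grind
  have hhq : h < q := by nlinarith
  rw [fract_mul_div_eq_of_mul_eq hu hhq hnum hikq, ← hden, ← cfEval_zero_cons_natCast hpos]
  simp

/-- Lemma 5 of the paper: the continued fraction of `{h k̄ / q}` is obtained by glueing
those of `{-h q̄ / k}` and `{-k q̄ / h}` with a middle partial quotient `d ≈ q/(hk)`. -/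
theorem continued_fraction_glueing (h k q : ℕ) (hh : 0 < h) (hk : 0 < k) (hq : 0 < q)
    (chk : Nat.Coprime h k) (chq : Nat.Coprime h q) (ckq : Nat.Coprime k q)
    (hbig : 4 * h * k ≤ q)
    (iqk iqh ikq : ℤ)
    (hiqk : (q : ℤ) * iqk ≡ 1 [ZMOD (k : ℤ)])
    (hiqh : (q : ℤ) * iqh ≡ 1 [ZMOD (h : ℤ)])
    (hikq : (k : ℤ) * ikq ≡ 1 [ZMOD (q : ℤ)])
    (b c : List ℕ) (hbpos : ∀ x ∈ b, 0 < x) (hcpos : ∀ x ∈ c, 0 < x)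
    (hbe : Even b.length) (hce : Even c.length)
    (hbcf : Int.fract ((-(h : ℝ) * iqk)/k) = cfEval ((0 : ℝ) :: b.map (Nat.cast)))
    (hccf : Int.fract ((-(k : ℝ) * iqh)/h) = cfEval ((0 : ℝ) :: c.map (Nat.cast))) :
    ∃ d : ℕ, 0 < d ∧ (q : ℝ)/(h * k) - 2 < (d : ℝ) ∧ (d : ℝ) ≤ (q : ℝ)/(h * k) ∧
      Int.fract (((h : ℝ) * ikq)/q) =
        cfEval ((0 : ℝ) :: (b.map (Nat.cast) ++ [(d : ℝ)] ++ (c.map (Nat.cast)).reverse)) :=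
  continued_fraction_glueing_general h k q hh hk chk (by nlinarith only [hbig]) iqk iqh ikq
    hiqk hiqh hikq b c hbpos hcpos hbe hce hbcf hccf
end

section
/- Let h, k, q be positive integers with gcd(h,k) = gcd(h,q) = gcd(k,q) = 1 and 0 < h < q. Then {h·inv_q(k)/q} = {−h·inv_k(q)/k} + h/(qk). -/
open Real

/-!
With `k̄ = inv_q k` and `q̄ = inv_k q`, the product `(k k̄ - 1)(q q̄ - 1)` is divisible by `k q`, so
`k k̄ + q q̄ ≡ 1` modulo `k q`. Multiplying by `h` and dividing by `k q` shows that `h k̄ / q` and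
`(-h q̄ + h/q) / k` differ by an integer. Since `0 ≤ h/q < 1`, the numerator `x = -h q̄ + h/q` has
integer part `-h q̄` and fractional part `h/q`, and `{x / k} = {⌊x⌋ / k} + {x} / k` because
`⌊x / k⌋` depends only on `⌊x⌋`.
-/

section FloorRing

variable {K : Type*} [Field K] [LinearOrder K] [IsStrictOrderedRing K] [FloorRing K]

theorem fract_div_natCast (x : K) (n : ℕ) :
    Int.fract (x / n) = Int.fract ((⌊x⌋ : K) / n) + Int.fract x / n := by
  have floor_eq : ⌊x / n⌋ = ⌊(⌊x⌋ : K) / n⌋ := by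
    rw [Int.floor_div_natCast, Int.floor_div_natCast, Int.floor_intCast]
  simp only [Int.fract, floor_eq]
  ring

theorem fract_intCast_add_div_natCast (a : ℤ) {t : K} (ht₀ : 0 ≤ t) (ht₁ : t < 1) (n : ℕ) :
    Int.fract ((a + t) / n) = Int.fract ((a : K) / n) + t / n := by
  have fract_t : Int.fract t = t := Int.fract_eq_self.mpr ⟨ht₀, ht₁⟩
  have floor_t : ⌊t⌋ = 0 := Int.floor_eq_zero_iff.mpr ⟨ht₀, ht₁⟩
  rw [fract_div_natCast, Int.floor_intCast_add, Int.fract_intCast_add, fract_t, floor_t, add_zero]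

end FloorRing

theorem mul_add_mul_modEq_one {a b u v : ℤ} (hu : a * u ≡ 1 [ZMOD b]) (hv : b * v ≡ 1 [ZMOD a]) :
    a * u + b * v ≡ 1 [ZMOD a * b] := by
  have dvd_product : a * b ∣ (b * v - 1) * (a * u - 1) := mul_dvd_mul hv.symm.dvd hu.symm.dvd
  have expand : 1 - (a * u + b * v) = (b * v - 1) * (a * u - 1) - a * b * (u * v) := by ring
  rw [Int.modEq_iff_dvd, expand]
  exact dvd_sub dvd_product (dvd_mul_right _ _)

theorem fract_inverse_relation_general {K : Type*} [Field K] [LinearOrder K]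
    [IsStrictOrderedRing K] [FloorRing K] {h k q : ℕ} (hk : 0 < k) (hlt : h < q) {kinv qinv : ℤ}
    (hkinv : (k : ℤ) * kinv ≡ 1 [ZMOD (q : ℤ)]) (hqinv : (q : ℤ) * qinv ≡ 1 [ZMOD (k : ℤ)]) :
    Int.fract (((h : K) * kinv) / q) = Int.fract ((-(h : K) * qinv) / k) + (h : K) / (q * k) := by
  have q_pos : (0 : K) < q := mod_cast Nat.zero_lt_of_lt hlt
  have div_lt : (h : K) / q < 1 := (div_lt_one q_pos).mpr (mod_cast hlt)
  obtain ⟨m, hm⟩ := Int.modEq_iff_add_fac.mp (mul_add_mul_modEq_one hkinv hqinv).symm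
  have bezout : (k : K) * kinv + q * qinv = 1 + k * q * m := mod_cast hm
  calc Int.fract ((h : K) * kinv / q)
      = Int.fract (((-h * qinv : ℤ) + (h : K) / q) / k + (h * m : ℤ)) := by
        congr 1
        push_cast
        field_simp
        linear_combination (h : K) * bezout
    _ = Int.fract (((-h * qinv : ℤ) : K) / k) + (h : K) / q / k := by
        rw [Int.fract_add_intCast, fract_intCast_add_div_natCast _ (by positivity) div_lt]
    _ = Int.fract (-(h : K) * qinv / k) + (h : K) / (q * k) := by
        push_cast
        rw [div_div]

/-- Equation (6.1) of the paper: `{h k̄ / q} = {-h q̄ / k} + h/(qk)`. -/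
theorem fract_inverse_relation (h k q : ℕ) (hh : 0 < h) (hk : 0 < k) (hq : 0 < q)
    (chk : Nat.Coprime h k) (chq : Nat.Coprime h q) (ckq : Nat.Coprime k q)
    (hlt : h < q)
    (kinv qinv : ℤ)
    (hkinv : (k : ℤ) * kinv ≡ 1 [ZMOD (q : ℤ)])
    (hqinv : (q : ℤ) * qinv ≡ 1 [ZMOD (k : ℤ)]) :
    Int.fract (((h : ℝ) * kinv)/q) = Int.fract ((-(h : ℝ) * qinv)/k) + (h : ℝ)/(q * k) :=
  fract_inverse_relation_general hk hlt hkinv hqinv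
end

section
/- Let s ∈ ℂ, let z ∈ ℂ with Im(z) > 0, and let c > 1/2 + |Re(s)|. Then S_0(s, z) = (1/2π)·∫_ℝ Γ(w)·ζ(1/2+w+s)·ζ(1/2+w−s)·(−2πiz)^{−w} dt, where w = c + it and the integral converges absolutely. -/
open Complex Real MeasureTheory

/-- `S_0(s,z) = ∑_{n≥1} e^{2πinz} σ_{2s}(n) n^{-(s+1/2)}`. -/
noncomputable def Sfun0 (s z : ℂ) : ℂ :=
  ∑' n : ℕ, Complex.exp (2 * π * Complex.I * n * z) *
    (∑ d ∈ n.divisors, (d:ℂ)^(2*s)) * (n:ℂ) ^ (-(s + 1/2))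

/-!
Mellin inversion of `t ↦ e^{-at}`, whose Mellin transform is `Γ(w) a^{-w}`, writes each
`e^{2πinz}` as an integral over the line `Re w = c`, with `a = -2πinz`. Multiplying by the
coefficients and summing under the integral sign turns the sum over `n` into the Dirichlet series
`∑ σ_{2s}(n) n^{-(s+1/2)} n^{-w} = ζ(1/2+w+s) ζ(1/2+w-s)`.

The integrals converge because `Γ(w) a^{-w}` is `O(|w|^{-2})` on the line: the Mellin integral
bounds `Γ(w+2) a^{-(w+2)}` there, and `Γ(w+2) = w (w+1) Γ(w)`.
-/

section MellinExp

open Filter Set Topology Asymptotics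

variable {a w : ℂ} {c : ℝ}

lemma norm_cpow_smul_exp_neg_mul (w a : ℂ) {t : ℝ} (ht : 0 < t) :
    ‖(t : ℂ) ^ (w - 1) • cexp (-(a * t))‖ = t ^ (w.re - 1) * rexp (-(a.re * t)) := by
  simp [norm_cpow_eq_rpow_re_of_pos ht, Complex.norm_exp]

lemma mellinConvergent_exp_neg_mul (hw : 0 < w.re) (ha : 0 < a.re) :
    MellinConvergent (fun t : ℝ ↦ cexp (-(a * t))) w := by
  have hcont : Continuous fun t : ℝ ↦ cexp (-(a * t)) := by fun_prop
  refine mellinConvergent_of_isBigO_rpow_exp (b := 0) ha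
    (hcont.locallyIntegrable.locallyIntegrableOn _) ?_ ?_ hw
  · exact isBigO_of_le _ fun t ↦ by simp [Complex.norm_exp]
  · simpa using (hcont.tendsto 0).mono_left nhdsWithin_le_nhds |>.isBigO_one ℝ

lemma hasDerivAt_mellin_exp_neg_mul (hw : 0 < w.re) (ha : 0 < a.re) :
    HasDerivAt (fun b : ℂ ↦ mellin (fun t : ℝ ↦ cexp (-(b * t))) w)
      (-mellin (fun t : ℝ ↦ cexp (-(a * t))) (w + 1)) a := by
  have hw' : 0 < (w + 1).re := by simpa using by linarith
  have hmem : {b : ℂ | a.re / 2 < b.re} ∈ 𝓝 a :=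
    (isOpen_lt continuous_const continuous_re).mem_nhds (half_lt_self ha)
  rw [mellin, ← integral_neg]
  refine (hasDerivAt_integral_of_dominated_loc_of_deriv_le
    (F := fun b (t : ℝ) ↦ (t : ℂ) ^ (w - 1) • cexp (-(b * t)))
    (F' := fun b (t : ℝ) ↦ -((t : ℂ) ^ (w + 1 - 1) • cexp (-(b * t))))
    (bound := fun t : ℝ ↦ ‖(t : ℂ) ^ (w + 1 - 1) • cexp (-((a / 2) * t))‖) hmem ?_
    (mellinConvergent_exp_neg_mul hw ha)
    (mellinConvergent_exp_neg_mul hw' ha).neg.aestronglyMeasurable ?_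
    (mellinConvergent_exp_neg_mul hw' (by simpa using ha)).norm ?_).2
  · filter_upwards [hmem] with b hb
    exact (mellinConvergent_exp_neg_mul hw ((half_pos ha).trans hb)).aestronglyMeasurable
  · filter_upwards [ae_restrict_mem measurableSet_Ioi] with t (ht : 0 < t) b (hb : a.re / 2 < b.re)
    rw [norm_neg, norm_cpow_smul_exp_neg_mul _ _ ht, norm_cpow_smul_exp_neg_mul _ _ ht,
      div_ofNat_re]
    gcongr
  · filter_upwards [ae_restrict_mem measurableSet_Ioi] with t (ht : 0 < t) b _
    have hlin : HasDerivAt (fun b : ℂ ↦ -(b * t)) (-(t : ℂ)) b :=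
      (hasDerivAt_mul_const (t : ℂ)).fun_neg
    have hpow : (t : ℂ) ^ (w + 1 - 1) = (t : ℂ) ^ (w - 1) * t := by
      rw [add_sub_right_comm, cpow_add _ _ (ofReal_ne_zero.2 ht.ne'), cpow_one]
    refine (hlin.cexp.const_smul ((t : ℂ) ^ (w - 1))).congr_deriv ?_
    simp only [hpow, smul_eq_mul]
    ring

lemma mellin_exp_neg_ofReal_mul (hw : 0 < w.re) {r : ℝ} (hr : 0 < r) :
    mellin (fun t : ℝ ↦ cexp (-(r * t))) w = Complex.Gamma w * (r : ℂ) ^ (-w) := by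
  have harg : (r : ℂ).arg ≠ π := by simpa [arg_ofReal_of_nonneg hr.le] using pi_pos.ne
  simp only [mellin, smul_eq_mul]
  rw [integral_cpow_mul_exp_neg_mul_Ioi hw hr, one_div, inv_cpow _ _ harg, cpow_neg, mul_comm]

-- Both sides are holomorphic in `a` on the right half-plane and agree for positive real `a`.
theorem mellin_exp_neg_mul (hw : 0 < w.re) (ha : 0 < a.re) :
    mellin (fun t : ℝ ↦ cexp (-(a * t))) w = Complex.Gamma w * a ^ (-w) := by
  have hopen : IsOpen {b : ℂ | 0 < b.re} := isOpen_lt continuous_const continuous_re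
  have hlhs : AnalyticOnNhd ℂ (fun b : ℂ ↦ mellin (fun t : ℝ ↦ cexp (-(b * t))) w)
      {b : ℂ | 0 < b.re} :=
    DifferentiableOn.analyticOnNhd (fun b hb ↦
      (hasDerivAt_mellin_exp_neg_mul hw hb).differentiableAt.differentiableWithinAt) hopen
  have hrhs : AnalyticOnNhd ℂ (fun b : ℂ ↦ Complex.Gamma w * b ^ (-w)) {b : ℂ | 0 < b.re} :=
    DifferentiableOn.analyticOnNhd (fun b hb ↦
      ((differentiableAt_id.cpow_const (Or.inl hb)).const_mul _).differentiableWithinAt) hopen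
  have hpos : ∀ᶠ r : ℝ in 𝓝[≠] 1,
      mellin (fun t : ℝ ↦ cexp (-(r * t))) w = Complex.Gamma w * (r : ℂ) ^ (-w) :=
    eventually_nhdsWithin_of_eventually_nhds <|
      (lt_mem_nhds one_pos).mono fun r hr ↦ mellin_exp_neg_ofReal_mul hw hr
  have hofReal : Tendsto ((↑) : ℝ → ℂ) (𝓝[≠] 1) (𝓝[≠] ((1 : ℝ) : ℂ)) :=
    continuous_ofReal.continuousWithinAt.tendsto_nhdsWithin fun _ hr ↦ ofReal_injective.ne hr
  exact hlhs.eqOn_of_preconnected_of_frequently_eq hrhs (convex_halfSpace_re_gt 0).isPreconnected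
    (by simp) (hofReal.frequently hpos.frequently) ha

lemma norm_Gamma_mul_cpow_neg_le (hw : 0 < w.re) (ha : 0 < a.re) :
    ‖Complex.Gamma w * a ^ (-w)‖ ≤ (1 / a.re) ^ w.re * Real.Gamma w.re :=
  calc ‖Complex.Gamma w * a ^ (-w)‖
      = ‖mellin (fun t : ℝ ↦ cexp (-(a * t))) w‖ := by rw [mellin_exp_neg_mul hw ha]
    _ ≤ ∫ t : ℝ in Ioi 0, ‖(t : ℂ) ^ (w - 1) • cexp (-(a * t))‖ :=
        norm_integral_le_integral_norm _
    _ = ∫ t : ℝ in Ioi 0, t ^ (w.re - 1) * rexp (-(a.re * t)) :=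
        setIntegral_congr_fun measurableSet_Ioi fun _ ht ↦ norm_cpow_smul_exp_neg_mul w a ht
    _ = (1 / a.re) ^ w.re * Real.Gamma w.re := Real.integral_rpow_mul_exp_neg_mul_Ioi hw ha

lemma mul_add_one_mul_Gamma_mul_cpow_neg (hw : w ≠ 0) (hw' : w + 1 ≠ 0) (ha : a ≠ 0) :
    w * (w + 1) * (Complex.Gamma w * a ^ (-w)) =
      Complex.Gamma (w + 2) * a ^ (-(w + 2)) * a ^ 2 := by
  have hGamma : Complex.Gamma (w + 2) = (w + 1) * (w * Complex.Gamma w) := by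
    rw [← Complex.Gamma_add_one w hw, ← Complex.Gamma_add_one _ hw', add_assoc, one_add_one_eq_two]
  have hpow : a ^ (-w) = a ^ (-(w + 2)) * a ^ 2 := by
    rw [← cpow_ofNat, ← cpow_add _ _ ha]
    ring_nf
  rw [hGamma, hpow]
  ring

lemma norm_Gamma_mul_cpow_neg_vertical_le (hc : 0 < c) (ha : 0 < a.re) (t : ℝ) :
    ‖Complex.Gamma (c + t * I) * a ^ (-(c + t * I : ℂ))‖ ≤
      (1 / a.re) ^ (c + 2) * Real.Gamma (c + 2) * ‖a‖ ^ 2 / c ^ 2 * (1 + (t / c) ^ 2)⁻¹ := by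
  set w : ℂ := c + t * I with hw
  have hre : w.re = c := by simp [hw]
  have him : w.im = t := by simp [hw]
  have ha0 : a ≠ 0 := by rintro rfl; simp at ha
  have hnorm_sq : ‖w‖ ^ 2 = c ^ 2 * (1 + (t / c) ^ 2) := by
    rw [Complex.sq_norm, normSq_apply, hre, him]
    field_simp
  have hnorm_le : ‖w‖ ≤ ‖w + 1‖ := by
    rw [← sq_le_sq₀ (norm_nonneg _) (norm_nonneg _), Complex.sq_norm, Complex.sq_norm,
      normSq_apply, normSq_apply]
    simp only [add_re, one_re, add_im, one_im]
    nlinarith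
  have hw0 : w ≠ 0 := fun h ↦ hc.ne' (by rw [← hre, h, zero_re])
  have hw1 : w + 1 ≠ 0 := norm_pos_iff.1 ((norm_pos_iff.2 hw0).trans_le hnorm_le)
  have hshift : ‖Complex.Gamma (w + 2) * a ^ (-(w + 2))‖ ≤
      (1 / a.re) ^ (c + 2) * Real.Gamma (c + 2) := by
    have h := norm_Gamma_mul_cpow_neg_le (w := w + 2) (a := a) (by simpa using by linarith) ha
    simpa only [add_re, re_ofNat, hre] using h
  rw [← div_eq_mul_inv, div_div, ← hnorm_sq, le_div_iff₀ (by rw [hnorm_sq]; positivity)]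
  calc ‖Complex.Gamma w * a ^ (-w)‖ * ‖w‖ ^ 2
      ≤ ‖Complex.Gamma w * a ^ (-w)‖ * (‖w‖ * ‖w + 1‖) := by rw [sq]; gcongr
    _ = ‖Complex.Gamma (w + 2) * a ^ (-(w + 2))‖ * ‖a‖ ^ 2 := by
        rw [← norm_mul, ← norm_mul, mul_comm, mul_add_one_mul_Gamma_mul_cpow_neg hw0 hw1 ha0,
          norm_mul, norm_pow]
    _ ≤ (1 / a.re) ^ (c + 2) * Real.Gamma (c + 2) * ‖a‖ ^ 2 := by gcongr

lemma differentiableAt_Gamma_of_re_pos (hw : 0 < w.re) : DifferentiableAt ℂ Complex.Gamma w :=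
  Complex.differentiableAt_Gamma w fun m hm ↦ by
    have : (0 : ℝ) ≤ m := m.cast_nonneg
    rw [hm, neg_re, natCast_re] at hw
    linarith

lemma verticalIntegrable_Gamma_mul_cpow_neg (hc : 0 < c) (ha : 0 < a.re) :
    VerticalIntegrable (fun w ↦ Complex.Gamma w * a ^ (-w)) c := by
  have ha0 : a ≠ 0 := by rintro rfl; simp at ha
  have hGamma : Continuous fun t : ℝ ↦ Complex.Gamma (c + t * I) :=
    continuous_iff_continuousAt.2 fun t ↦
      (differentiableAt_Gamma_of_re_pos (by simpa using hc)).continuousAt.comp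
        (f := fun t : ℝ ↦ (c + t * I : ℂ)) (by fun_prop)
  have hpow : Continuous fun t : ℝ ↦ a ^ (-(c + t * I : ℂ)) :=
    Continuous.const_cpow (by fun_prop) (Or.inl ha0)
  exact ((integrable_inv_one_add_sq.comp_div hc.ne').const_mul _).mono'
    (hGamma.mul hpow).aestronglyMeasurable
    (.of_forall (norm_Gamma_mul_cpow_neg_vertical_le hc ha))

theorem mellinInv_Gamma_mul_cpow_neg (hc : 0 < c) (ha : 0 < a.re) {x : ℝ} (hx : 0 < x) :
    mellinInv c (fun w ↦ Complex.Gamma w * a ^ (-w)) x = cexp (-(a * x)) := by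
  have hmellin (t : ℝ) : mellin (fun u : ℝ ↦ cexp (-(a * u))) (c + t * I) =
      Complex.Gamma (c + t * I) * a ^ (-(c + t * I : ℂ)) :=
    mellin_exp_neg_mul (by simpa using hc) ha
  have hvert : VerticalIntegrable (mellin fun u : ℝ ↦ cexp (-(a * u))) c := by
    simpa only [VerticalIntegrable, hmellin] using verticalIntegrable_Gamma_mul_cpow_neg hc ha
  have hinv := mellinInv_mellin_eq c (fun u : ℝ ↦ cexp (-(a * u))) hx
    (mellinConvergent_exp_neg_mul (by simpa using hc) ha) hvert (by fun_prop)
  simpa only [mellinInv, hmellin] using hinv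

theorem exp_neg_eq_integral_Gamma_mul_cpow_neg (hc : 0 < c) (ha : 0 < a.re) :
    cexp (-a) =
      1 / (2 * π) * ∫ t : ℝ, Complex.Gamma (c + t * I) * a ^ (-(c + t * I : ℂ)) := by
  simpa [mellinInv] using (mellinInv_Gamma_mul_cpow_neg hc ha one_pos).symm

end MellinExp

section VerticalLSeries

lemma norm_LSeries_term_vertical (f : ℕ → ℂ) (c t : ℝ) (n : ℕ) :
    ‖LSeries.term f (c + t * I) n‖ = ‖LSeries.term f c n‖ := by
  simp [LSeries.norm_term_eq]

lemma continuous_LSeries_term (f : ℕ → ℂ) (n : ℕ) :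
    Continuous fun w ↦ LSeries.term f w n := by
  rcases eq_or_ne n 0 with rfl | hn
  · simpa only [LSeries.term_zero] using continuous_const
  · have hn' : (n : ℂ) ≠ 0 := Nat.cast_ne_zero.2 hn
    simp only [LSeries.term_of_ne_zero hn]
    exact continuous_const.div (continuous_id.const_cpow (Or.inl hn')) fun w ↦ by
      simp [cpow_eq_zero_iff, hn]

lemma continuous_LSeries_term_vertical (f : ℕ → ℂ) (c : ℝ) (n : ℕ) :
    Continuous fun t : ℝ ↦ LSeries.term f (c + t * I) n :=
  (continuous_LSeries_term f n).comp (by fun_prop)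

variable {f : ℕ → ℂ} {c : ℝ} {g : ℝ → ℂ} {μ : Measure ℝ}

lemma integrable_LSeries_mul (hf : LSeriesSummable f c) (hg : Integrable g μ) :
    Integrable (fun t : ℝ ↦ LSeries f (c + t * I) * g t) μ := by
  have hcont : Continuous fun t : ℝ ↦ LSeries f (c + t * I) :=
    continuous_tsum (continuous_LSeries_term_vertical f c) hf.norm
      fun n t ↦ (norm_LSeries_term_vertical f c t n).le
  exact hg.bdd_mul hcont.aestronglyMeasurable
    (.of_forall fun t ↦ tsum_of_norm_bounded hf.norm.hasSum fun n ↦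
      (norm_LSeries_term_vertical f c t n).le)

lemma hasSum_integral_LSeries_term_mul (hf : LSeriesSummable f c) (hg : Integrable g μ) :
    HasSum (fun n ↦ ∫ t : ℝ, LSeries.term f (c + t * I) n * g t ∂μ)
      (∫ t : ℝ, LSeries f (c + t * I) * g t ∂μ) := by
  have hint (n : ℕ) : Integrable (fun t : ℝ ↦ LSeries.term f (c + t * I) n * g t) μ :=
    hg.bdd_mul (continuous_LSeries_term_vertical f c n).aestronglyMeasurable
      (.of_forall fun t ↦ (norm_LSeries_term_vertical f c t n).le)
  have hsum : Summable fun n ↦ ∫ t : ℝ, ‖LSeries.term f (c + t * I) n * g t‖ ∂μ := by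
    simpa only [norm_mul, norm_LSeries_term_vertical, integral_const_mul]
      using hf.norm.mul_right (∫ t, ‖g t‖ ∂μ)
  simpa only [LSeries, tsum_mul_right] using hasSum_integral_of_summable_integral_norm hint hsum

end VerticalLSeries

lemma ofReal_mul_cpow {r : ℝ} (hr : 0 ≤ r) (a w : ℂ) :
    ((r : ℂ) * a) ^ w = (r : ℂ) ^ w * a ^ w := by
  rcases eq_or_ne w 0 with rfl | hw
  · simp
  rcases hr.eq_or_lt with rfl | hr_pos
  · simp [hw]
  rcases eq_or_ne a 0 with rfl | ha
  · simp [hw]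
  have hr0 : (r : ℂ) ≠ 0 := ofReal_ne_zero.2 hr_pos.ne'
  rw [cpow_def_of_ne_zero (mul_ne_zero hr0 ha), cpow_def_of_ne_zero hr0, cpow_def_of_ne_zero ha,
    log_ofReal_mul hr_pos ha, add_mul, Complex.exp_add, ofReal_log hr]

theorem hasSum_mul_exp_neg_natCast_mul {f : ℕ → ℂ} (hf0 : f 0 = 0) {c : ℝ} (hc : 0 < c)
    (hf : LSeriesSummable f c) {a : ℂ} (ha : 0 < a.re) :
    HasSum (fun n : ℕ ↦ f n * cexp (-(n * a)))
      (1 / (2 * π) * ∫ t : ℝ,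
        LSeries f (c + t * I) * (Complex.Gamma (c + t * I) * a ^ (-(c + t * I : ℂ)))) := by
  refine HasSum.congr_fun ((hasSum_integral_LSeries_term_mul hf
    (verticalIntegrable_Gamma_mul_cpow_neg hc ha)).mul_left (1 / (2 * π) : ℂ)) fun n ↦ ?_
  rcases eq_or_ne n 0 with rfl | hn
  · simp [hf0]
  have hn_pos : (0 : ℝ) < n := Nat.cast_pos.2 (Nat.pos_of_ne_zero hn)
  have hterm (t : ℝ) :
      LSeries.term f (c + t * I) n * (Complex.Gamma (c + t * I) * a ^ (-(c + t * I : ℂ))) =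
        f n * (Complex.Gamma (c + t * I) * (n * a) ^ (-(c + t * I : ℂ))) := by
    rw [LSeries.term_of_ne_zero hn, ← ofReal_natCast, ofReal_mul_cpow hn_pos.le, cpow_neg (n : ℝ)]
    ring
  rw [exp_neg_eq_integral_Gamma_mul_cpow_neg hc (a := n * a) (by simpa using mul_pos hn_pos ha)]
  simp only [hterm, integral_const_mul]
  ring

section DivisorSums

open scoped LSeries.notation

lemma LSeries_term_natCast_cpow (u w : ℂ) (n : ℕ) :
    LSeries.term (fun n : ℕ ↦ (n : ℂ) ^ u) w n = LSeries.term 1 (w - u) n := by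
  rcases eq_or_ne n 0 with rfl | hn
  · simp
  · simp [LSeries.term_of_ne_zero hn, cpow_sub _ _ (Nat.cast_ne_zero.2 hn)]

lemma LSeriesHasSum_natCast_cpow {u w : ℂ} (h : 1 < (w - u).re) :
    LSeriesHasSum (fun n : ℕ ↦ (n : ℂ) ^ u) w (riemannZeta (w - u)) := by
  rw [LSeriesHasSum, funext (LSeries_term_natCast_cpow u w), ← LSeries_one_eq_riemannZeta h]
  exact (LSeriesSummable_one_iff.2 h).LSeriesHasSum

lemma convolution_natCast_cpow (u v : ℂ) :
    (fun n : ℕ ↦ (n : ℂ) ^ u) ⍟ (fun n : ℕ ↦ (n : ℂ) ^ v) =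
      fun n : ℕ ↦ (∑ d ∈ n.divisors, (d : ℂ) ^ (u - v)) * (n : ℂ) ^ v := by
  ext n
  rw [LSeries.convolution_def]
  dsimp only
  rw [Nat.sum_divisorsAntidiagonal fun d e : ℕ ↦ (d : ℂ) ^ u * (e : ℂ) ^ v, Finset.sum_mul]
  refine Finset.sum_congr rfl fun d hd ↦ ?_
  have hd0 : (d : ℂ) ≠ 0 := Nat.cast_ne_zero.2 (Nat.pos_of_mem_divisors hd).ne'
  obtain ⟨e, rfl⟩ := Nat.dvd_of_mem_divisors hd
  rw [Nat.mul_div_cancel_left _ (Nat.pos_of_mem_divisors hd), Nat.cast_mul,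
    natCast_mul_natCast_cpow, ← mul_assoc, ← cpow_add _ _ hd0, sub_add_cancel]

lemma LSeriesHasSum_sum_divisors_cpow_mul_cpow {u v w : ℂ} (hu : 1 < (w - u).re)
    (hv : 1 < (w - v).re) :
    LSeriesHasSum (fun n : ℕ ↦ (∑ d ∈ n.divisors, (d : ℂ) ^ (u - v)) * (n : ℂ) ^ v) w
      (riemannZeta (w - u) * riemannZeta (w - v)) :=
  convolution_natCast_cpow u v ▸
    (LSeriesHasSum_natCast_cpow hu).convolution (LSeriesHasSum_natCast_cpow hv)

lemma LSeriesHasSum_sigma_mul_cpow {s w : ℂ} (h : 1 / 2 + |s.re| < w.re) :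
    LSeriesHasSum (fun n : ℕ ↦ (∑ d ∈ n.divisors, (d : ℂ) ^ (2 * s)) * (n : ℂ) ^ (-(s + 1 / 2))) w
      (riemannZeta (1 / 2 + w + s) * riemannZeta (1 / 2 + w - s)) := by
  have hhalf : (1 / 2 : ℂ).re = 1 / 2 := by norm_num
  have hu : 1 < (w - (s - 1 / 2)).re := by
    simp only [sub_re, hhalf]
    linarith [le_abs_self s.re]
  have hv : 1 < (w - -(s + 1 / 2)).re := by
    simp only [sub_re, neg_re, add_re, hhalf]
    linarith [neg_abs_le s.re]
  convert LSeriesHasSum_sum_divisors_cpow_mul_cpow hu hv using 1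
  · ring_nf
  · rw [mul_comm]
    ring_nf

end DivisorSums

/-- The Mellin-type integral representation of `S_0(s,z)` on a vertical line
`Re w = c` with `c > 1/2 + |Re s|`. -/
theorem S0_integral_representation (s z : ℂ) (hz : 0 < z.im) (c : ℝ)
    (hc : 1/2 + |s.re| < c) :
    Integrable (fun t : ℝ =>
      Complex.Gamma ((c : ℂ) + t * Complex.I) *
        riemannZeta (1/2 + ((c : ℂ) + t * Complex.I) + s) *
        riemannZeta (1/2 + ((c : ℂ) + t * Complex.I) - s) *
        (-(2 * π * Complex.I * z)) ^ (-((c : ℂ) + t * Complex.I))) ∧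
    Sfun0 s z = (1/(2*π)) *
      ∫ t : ℝ,
        Complex.Gamma ((c : ℂ) + t * Complex.I) *
          riemannZeta (1/2 + ((c : ℂ) + t * Complex.I) + s) *
          riemannZeta (1/2 + ((c : ℂ) + t * Complex.I) - s) *
          (-(2 * π * Complex.I * z)) ^ (-((c : ℂ) + t * Complex.I)) := by
  set a : ℂ := -(2 * π * Complex.I * z) with ha
  set f : ℕ → ℂ := fun n ↦ (∑ d ∈ n.divisors, (d : ℂ) ^ (2 * s)) * (n : ℂ) ^ (-(s + 1 / 2)) with hf
  have hc_pos : 0 < c := by linarith [abs_nonneg s.re]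
  have ha_pos : 0 < a.re := by simpa [ha] using mul_pos two_pi_pos hz
  have hsum : LSeriesSummable f c := (LSeriesHasSum_sigma_mul_cpow hc).LSeriesSummable
  have hintegrand (t : ℝ) :
      Complex.Gamma (c + t * I) * riemannZeta (1/2 + (c + t * I) + s) *
          riemannZeta (1/2 + (c + t * I) - s) * a ^ (-(c + t * I : ℂ)) =
        LSeries f (c + t * I) * (Complex.Gamma (c + t * I) * a ^ (-(c + t * I : ℂ))) := by
    rw [(LSeriesHasSum_sigma_mul_cpow (by simpa using hc)).LSeries_eq]
    ring
  simp only [hintegrand]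
  refine ⟨integrable_LSeries_mul hsum (verticalIntegrable_Gamma_mul_cpow_neg hc_pos ha_pos), ?_⟩
  rw [← (hasSum_mul_exp_neg_natCast_mul (by simp [hf]) hc_pos hsum ha_pos).tsum_eq, Sfun0]
  refine tsum_congr fun n ↦ ?_
  have hexp : cexp (2 * π * I * n * z) = cexp (-(n * a)) := by rw [ha]; ring_nf
  rw [hexp, mul_assoc, mul_comm]
end
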